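/- arXiv:1604.02897 — 6 statements merged into one kernel-verified Lean document; each statement's English description precedes it below -/
import Mathlib

section
/- The Young complement G̃ is differentiable on (0,∞) and satisfies, for every s > 0, (g₁/(g₁ − 1))·G̃(s) ≤ s·G̃′(s) ≤ (g₀/(g₀ − 1))·G̃(s). -/
open Real MeasureTheory Set Filter

section OrliczYoung

variable {g g' : ℝ → ℝ}

theorem strictMonoOn_of_orlicz_lower {p : ℝ} (hp : 0 < p)
    (hg_pos : ∀ s, 0 < s → 0 < g s) (hg_deriv : ∀ s, 0 < s → HasDerivAt g (g' s) s)
    (hlow : ∀ s, 0 < s → p * g s ≤ s * g' s) : StrictMonoOn g (Ioi 0) := by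
  refine strictMonoOn_of_deriv_pos (convex_Ioi 0)
    (fun x hx => (hg_deriv x hx).continuousAt.continuousWithinAt) fun x hx => ?_
  rw [interior_Ioi] at hx
  rw [(hg_deriv x hx).deriv]
  exact pos_of_mul_pos_right ((mul_pos hp (hg_pos x hx)).trans_le (hlow x hx)) (le_of_lt hx)

theorem monotoneOn_mul_rpow_neg_of_orlicz_lower {p : ℝ}
    (hg_deriv : ∀ s, 0 < s → HasDerivAt g (g' s) s)
    (hlow : ∀ s, 0 < s → p * g s ≤ s * g' s) :
    MonotoneOn (fun r => g r * r ^ (-p)) (Ioi 0) := by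
  have hd : ∀ x : ℝ, 0 < x → HasDerivAt (fun r => g r * r ^ (-p))
      (g' x * x ^ (-p) + g x * (-p * x ^ (-p - 1))) x := fun x hx =>
    (hg_deriv x hx).mul (Real.hasDerivAt_rpow_const (Or.inl hx.ne'))
  refine monotoneOn_of_deriv_nonneg (convex_Ioi 0)
    (fun x hx => (hd x hx).continuousAt.continuousWithinAt) ?_ fun x hx => ?_
  · rw [interior_Ioi]
    exact fun x hx => (hd x hx).differentiableAt.differentiableWithinAt
  rw [interior_Ioi] at hx
  have hx : 0 < x := hx
  have hsplit : x ^ (-p) = x * x ^ (-p - 1) := by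
    rw [Real.rpow_sub_one hx.ne']
    field_simp
  rw [(hd x hx).deriv, hsplit]
  have := mul_nonneg (sub_nonneg.2 (hlow x hx)) (Real.rpow_pos_of_pos hx (-p - 1)).le
  linarith

/-- A positive function satisfying the lower Orlicz condition attains every positive value. -/
theorem exists_eq_of_orlicz_lower {p : ℝ} (hp : 0 < p)
    (hg_pos : ∀ s, 0 < s → 0 < g s) (hg_deriv : ∀ s, 0 < s → HasDerivAt g (g' s) s)
    (hlow : ∀ s, 0 < s → p * g s ≤ s * g' s) {s : ℝ} (hs : 0 < s) :
    ∃ t, 0 < t ∧ g t = s := by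
  have hmono := monotoneOn_mul_rpow_neg_of_orlicz_lower hg_deriv hlow
  have h1 := hg_pos 1 one_pos
  set x : ℝ := (s / g 1) ^ p⁻¹ with hxdef
  have hx : 0 < x := Real.rpow_pos_of_pos (div_pos hs h1) _
  have hxp : x ^ p = s / g 1 := Real.rpow_inv_rpow (div_pos hs h1).le hp.ne'
  have hs_eq : s = g 1 * x ^ p := by rw [hxp]; field_simp
  have hpos : 0 < x ^ p := Real.rpow_pos_of_pos hx p
  have hcont : ContinuousOn g (uIcc 1 x) := fun y hy =>
    (hg_deriv y ((lt_min one_pos hx).trans_le hy.1)).continuousAt.continuousWithinAt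
  have hmem : s ∈ uIcc (g 1) (g x) := by
    rcases le_total x 1 with hx1 | hx1
    · have h := hmono hx (mem_Ioi.2 one_pos) hx1
      simp only [Real.one_rpow, mul_one, Real.rpow_neg hx.le] at h
      rw [← div_eq_mul_inv, div_le_iff₀ hpos] at h
      refine mem_uIcc.2 (Or.inr ⟨h.trans_eq hs_eq.symm, ?_⟩)
      rw [hs_eq]
      exact mul_le_of_le_one_right h1.le (Real.rpow_le_one hx.le hx1 hp.le)
    · have h := hmono (mem_Ioi.2 one_pos) hx hx1
      simp only [Real.one_rpow, mul_one, Real.rpow_neg hx.le] at h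
      rw [← div_eq_mul_inv, le_div_iff₀ hpos] at h
      refine mem_uIcc.2 (Or.inl ⟨?_, hs_eq.le.trans h⟩)
      rw [hs_eq]
      exact le_mul_of_one_le_right h1.le (Real.one_le_rpow hx1 hp.le)
  obtain ⟨t, ht, hts⟩ := intermediate_value_uIcc hcont hmem
  exact ⟨t, (lt_min one_pos hx).trans_le ht.1, hts⟩

theorem intervalIntegrable_of_monotoneOn_Ioi (hg_pos : ∀ s, 0 < s → 0 < g s)
    (hmono : MonotoneOn g (Ioi 0)) {a b : ℝ} (ha : 0 ≤ a) (hb : 0 ≤ b) :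
    IntervalIntegrable g volume a b := by
  have h : Monotone ((Ioi (0 : ℝ)).indicator g) := by
    intro x y hxy
    by_cases hx : 0 < x
    · have hy := hx.trans_le hxy
      simpa [indicator, hx, hy] using hmono hx hy hxy
    · by_cases hy : 0 < y
      · simpa [indicator, hx, hy] using (hg_pos y hy).le
      · simp [indicator, hx, hy]
  refine h.intervalIntegrable.congr fun x hx => ?_
  exact indicator_of_mem (mem_Ioi.2 ((le_min ha hb).trans_lt hx.1)) g

/-- The primitive of a monotone function lies above its tangent lines. -/
theorem mul_sub_le_integral_of_monotoneOn_Ioi (hg_pos : ∀ s, 0 < s → 0 < g s)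
    (hmono : MonotoneOn g (Ioi 0)) {r t : ℝ} (hr : 0 ≤ r) (ht : 0 < t) :
    g t * (r - t) ≤ ∫ x in t..r, g x := by
  have hconst : (∫ _ in t..r, g t) = g t * (r - t) := by simp [mul_comm]
  rw [← hconst]
  rcases le_total t r with htr | hrt
  · exact intervalIntegral.integral_mono_on htr (by simp)
      (intervalIntegrable_of_monotoneOn_Ioi hg_pos hmono ht.le hr)
      fun x hx => hmono ht (ht.trans_le hx.1) hx.1
  · rw [intervalIntegral.integral_symm r t, intervalIntegral.integral_symm r t, neg_le_neg_iff]
    exact intervalIntegral.integral_mono_on_of_le_Ioo hrt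
      (intervalIntegrable_of_monotoneOn_Ioi hg_pos hmono hr ht.le) (by simp)
      fun x hx => hmono (hr.trans_lt hx.1) ht hx.2.le

theorem hasDerivAt_integral_of_monotoneOn_Ioi (hg_pos : ∀ s, 0 < s → 0 < g s)
    (hg_deriv : ∀ s, 0 < s → HasDerivAt g (g' s) s)
    (hmono : MonotoneOn g (Ioi 0)) {t : ℝ} (ht : 0 < t) :
    HasDerivAt (fun u => ∫ x in (0 : ℝ)..u, g x) (g t) t :=
  intervalIntegral.integral_hasDerivAt_right
    (intervalIntegrable_of_monotoneOn_Ioi hg_pos hmono le_rfl ht.le)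
    (ContinuousOn.stronglyMeasurableAtFilter isOpen_Ioi
      (fun x hx => (hg_deriv x hx).continuousAt.continuousWithinAt) t ht)
    (hg_deriv t ht).continuousAt

theorem continuousOn_id_mul_sub_integral (hg_pos : ∀ s, 0 < s → 0 < g s)
    (hg_deriv : ∀ s, 0 < s → HasDerivAt g (g' s) s)
    (hmono : MonotoneOn g (Ioi 0)) (c : ℝ) {t : ℝ} (ht : 0 < t) :
    ContinuousOn (fun u => u * g u - c * ∫ x in (0 : ℝ)..u, g x) (Icc 0 t) := by
  refine ContinuousOn.sub (fun x hx => ?_) (continuousOn_const.mul ?_)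
  · rcases hx.1.eq_or_lt with rfl | hx0
    · have hlim : Tendsto (fun u : ℝ => u * g t) (nhdsWithin 0 (Icc 0 t)) (nhds 0) := by
        have : Continuous fun u : ℝ => u * g t := by fun_prop
        simpa using (this.tendsto 0).mono_left nhdsWithin_le_nhds
      have hbound : ∀ u ∈ Icc 0 t, 0 ≤ u * g u ∧ u * g u ≤ u * g t := fun u hu => by
        rcases hu.1.eq_or_lt with rfl | hu0
        · simp
        · exact ⟨(mul_pos hu0 (hg_pos u hu0)).le,
            mul_le_mul_of_nonneg_left (hmono hu0 ht hu.2) hu0.le⟩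
      unfold ContinuousWithinAt
      simp only [zero_mul]
      refine squeeze_zero' ?_ ?_ hlim
      · filter_upwards [self_mem_nhdsWithin] with u hu using (hbound u hu).1
      · filter_upwards [self_mem_nhdsWithin] with u hu using (hbound u hu).2
    · exact (continuousAt_id.mul (hg_deriv x hx0).continuousAt).continuousWithinAt
  · have h := intervalIntegrable_of_monotoneOn_Ioi hg_pos hmono le_rfl ht.le
    have := intervalIntegral.continuousOn_primitive_interval' h left_mem_uIcc
    rwa [uIcc_of_le ht.le] at this

theorem mul_integral_le_of_orlicz_lower {c : ℝ} (hg_pos : ∀ s, 0 < s → 0 < g s)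
    (hg_deriv : ∀ s, 0 < s → HasDerivAt g (g' s) s) (hmono : MonotoneOn g (Ioi 0))
    (hlow : ∀ s, 0 < s → (c - 1) * g s ≤ s * g' s) {t : ℝ} (ht : 0 < t) :
    c * ∫ x in (0 : ℝ)..t, g x ≤ t * g t := by
  have hd : ∀ x : ℝ, 0 < x → HasDerivAt (fun u => u * g u - c * ∫ x in (0 : ℝ)..u, g x)
      (1 * g x + x * g' x - c * g x) x := fun x hx =>
    ((hasDerivAt_id x).mul (hg_deriv x hx)).sub
      ((hasDerivAt_integral_of_monotoneOn_Ioi hg_pos hg_deriv hmono hx).const_mul c)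
  have h := monotoneOn_of_deriv_nonneg (convex_Icc 0 t)
    (continuousOn_id_mul_sub_integral hg_pos hg_deriv hmono c ht)
    (by
      rw [interior_Icc]
      exact fun x hx => (hd x hx.1).differentiableAt.differentiableWithinAt)
    (by
      rw [interior_Icc]
      intro x hx
      rw [(hd x hx.1).deriv]
      linarith [hlow x hx.1])
    (left_mem_Icc.2 ht.le) (right_mem_Icc.2 ht.le) ht.le
  simpa using h

theorem le_mul_integral_of_orlicz_upper {c : ℝ} (hg_pos : ∀ s, 0 < s → 0 < g s)
    (hg_deriv : ∀ s, 0 < s → HasDerivAt g (g' s) s) (hmono : MonotoneOn g (Ioi 0))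
    (hup : ∀ s, 0 < s → s * g' s ≤ (c - 1) * g s) {t : ℝ} (ht : 0 < t) :
    t * g t ≤ c * ∫ x in (0 : ℝ)..t, g x := by
  have hd : ∀ x : ℝ, 0 < x → HasDerivAt (fun u => u * g u - c * ∫ x in (0 : ℝ)..u, g x)
      (1 * g x + x * g' x - c * g x) x := fun x hx =>
    ((hasDerivAt_id x).mul (hg_deriv x hx)).sub
      ((hasDerivAt_integral_of_monotoneOn_Ioi hg_pos hg_deriv hmono hx).const_mul c)
  have h := antitoneOn_of_deriv_nonpos (convex_Icc 0 t)
    (continuousOn_id_mul_sub_integral hg_pos hg_deriv hmono c ht)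
    (by
      rw [interior_Icc]
      exact fun x hx => (hd x hx.1).differentiableAt.differentiableWithinAt)
    (by
      rw [interior_Icc]
      intro x hx
      rw [(hd x hx.1).deriv]
      linarith [hup x hx.1])
    (left_mem_Icc.2 ht.le) (right_mem_Icc.2 ht.le) ht.le
  simpa using h

/-- A function trapped between the slopes `φ s` and `φ s'`, with `φ` continuous at `s`,
has derivative `φ s` at `s`. -/
theorem hasDerivAt_of_subgradient {F φ : ℝ → ℝ} {s : ℝ} (hφ : ContinuousAt φ s)
    (hlow : ∀ᶠ y in nhds s, φ s * (y - s) ≤ F y - F s)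
    (hup : ∀ᶠ y in nhds s, F y - F s ≤ φ y * (y - s)) : HasDerivAt F (φ s) s := by
  rw [hasDerivAt_iff_isLittleO, Asymptotics.isLittleO_iff]
  intro c hc
  filter_upwards [hlow, hup, Metric.continuousAt_iff'.1 hφ c hc] with y h1 h2 h3
  rw [smul_eq_mul, Real.norm_eq_abs, Real.norm_eq_abs, abs_of_nonneg (by linarith)]
  rw [Real.dist_eq] at h3
  calc F y - F s - (y - s) * φ s ≤ (φ y - φ s) * (y - s) := by linarith
    _ ≤ |φ y - φ s| * |y - s| := (le_abs_self _).trans_eq (abs_mul _ _)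
    _ ≤ c * |y - s| := mul_le_mul_of_nonneg_right h3.le (abs_nonneg _)

/-- A right inverse of a strictly increasing function on `(0, ∞)` is continuous. -/
theorem continuousAt_of_strictMonoOn_Ioi {φ : ℝ → ℝ} (hmono : StrictMonoOn g (Ioi 0))
    (hφ : ∀ s, 0 < s → 0 < φ s ∧ g (φ s) = s) {s : ℝ} (hs : 0 < s) : ContinuousAt φ s := by
  obtain ⟨ht, hts⟩ := hφ s hs
  refine tendsto_order.2 ⟨fun a ha => ?_, fun b hb => ?_⟩
  · rcases le_or_gt a 0 with ha0 | ha0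
    · filter_upwards [Ioi_mem_nhds hs] with y hy using ha0.trans_lt (hφ y hy).1
    · have hlt : g a < s := hts ▸ hmono ha0 ht ha
      filter_upwards [Ioi_mem_nhds hs, Ioi_mem_nhds hlt] with y hy hay
      refine (hmono.lt_iff_lt ha0 (hφ y hy).1).1 ?_
      rwa [(hφ y hy).2]
  · have hlt : s < g b := hts ▸ hmono ht (ht.trans hb) hb
    filter_upwards [Ioi_mem_nhds hs, Iio_mem_nhds hlt] with y hy hyb
    refine (hmono.lt_iff_lt (hφ y hy).1 (ht.trans hb)).1 ?_
    rwa [(hφ y hy).2]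

end OrliczYoung

/-- The Young complement `G̃` is differentiable on `(0,∞)` and satisfies, for every `s > 0`,
`(g₁/(g₁−1))·G̃(s) ≤ s·G̃′(s) ≤ (g₀/(g₀−1))·G̃(s)`. -/
theorem orlicz_condition_for_young_complement
    (g₀ g₁ : ℝ) (hg₀ : 1 < g₀) (hg01 : g₀ ≤ g₁)
    (g g' : ℝ → ℝ)
    (hg_pos : ∀ s, 0 < s → 0 < g s)
    (hg_deriv : ∀ s, 0 < s → HasDerivAt g (g' s) s)
    (hg'_cont : ContinuousOn g' (Set.Ioi 0))
    (hOrlicz : ∀ s, 0 < s → (g₀ - 1) * g s ≤ s * g' s ∧ s * g' s ≤ (g₁ - 1) * g s)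
    (G : ℝ → ℝ) (hG : ∀ s, G s = ∫ r in (0:ℝ)..s, g r)
    (Gt : ℝ → ℝ) (hGt : ∀ s, Gt s = sSup ((fun r => s * r - G r) '' Set.Ici 0)) :
    ∀ s, 0 < s → ∃ d : ℝ, HasDerivAt Gt d s ∧
      (g₁ / (g₁ - 1)) * Gt s ≤ s * d ∧ s * d ≤ (g₀ / (g₀ - 1)) * Gt s := by
  have hp : 0 < g₀ - 1 := sub_pos.2 hg₀
  have hlow := fun s hs => (hOrlicz s hs).1
  have hstrict := strictMonoOn_of_orlicz_lower hp hg_pos hg_deriv hlow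
  have hmono := hstrict.monotoneOn
  choose! φ hφ using fun s (hs : 0 < s) =>
    exists_eq_of_orlicz_lower hp hg_pos hg_deriv hlow hs
  have htangent : ∀ s, 0 < s → ∀ r, 0 ≤ r → s * r - G r ≤ s * φ s - G (φ s) := by
    intro s hs r hr
    obtain ⟨ht, hts⟩ := hφ s hs
    have h := mul_sub_le_integral_of_monotoneOn_Ioi hg_pos hmono hr ht
    rw [← intervalIntegral.integral_interval_sub_left
      (intervalIntegrable_of_monotoneOn_Ioi hg_pos hmono le_rfl hr)
      (intervalIntegrable_of_monotoneOn_Ioi hg_pos hmono le_rfl ht.le), ← hG, ← hG, hts] at h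
    linarith
  have hval : ∀ s, 0 < s → Gt s = s * φ s - G (φ s) := by
    intro s hs
    rw [hGt]
    refine IsGreatest.csSup_eq ⟨mem_image_of_mem _ (hφ s hs).1.le, ?_⟩
    rintro _ ⟨r, hr, rfl⟩
    exact htangent s hs r hr
  intro s hs
  obtain ⟨ht, hts⟩ := hφ s hs
  refine ⟨φ s, hasDerivAt_of_subgradient (continuousAt_of_strictMonoOn_Ioi hstrict hφ hs) ?_ ?_,
    ?_, ?_⟩
  · filter_upwards [Ioi_mem_nhds hs] with y hy
    rw [hval y hy, hval s hs]
    linarith [htangent y hy (φ s) ht.le]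
  · filter_upwards [Ioi_mem_nhds hs] with y hy
    rw [hval y hy, hval s hs]
    linarith [htangent s hs (φ y) (hφ y hy).1.le]
  · have h := le_mul_integral_of_orlicz_upper hg_pos hg_deriv hmono
      (fun s hs => (hOrlicz s hs).2) ht
    rw [← hG, hts] at h
    rw [hval s hs, div_mul_eq_mul_div, div_le_iff₀ (by linarith)]
    linarith
  · have h := mul_integral_le_of_orlicz_lower hg_pos hg_deriv hmono hlow ht
    rw [← hG, hts] at h
    rw [hval s hs, div_mul_eq_mul_div, le_div_iff₀ hp]
    linarith
end

section
/- (Strict monotonicity) There exists a constant c > 0, depending only on g₀, g₁ and ν, such that for all ξ₁, ξ₂ ∈ ℝⁿ with |ξ₁| + |ξ₂| > 0 one has ⟨𝒜(ξ₁) − 𝒜(ξ₂), ξ₁ − ξ₂⟩ ≥ c·g′(|ξ₁| + |ξ₂|)·|ξ₁ − ξ₂|². -/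
open Real MeasureTheory Set Filter
open scoped RealInnerProductSpace

/-- If `s * g' s ≤ p * g s` on the positive half-line, then `g s / s ^ p` is nonincreasing there. -/
lemma antitoneOn_mul_rpow_neg {g g' : ℝ → ℝ} {p : ℝ}
    (hg : ∀ s, 0 < s → HasDerivAt g (g' s) s) (hp : ∀ s, 0 < s → s * g' s ≤ p * g s) :
    AntitoneOn (fun s => g s * s ^ (-p)) (Ioi 0) := by
  have hd : ∀ s, 0 < s →
      HasDerivAt (fun s => g s * s ^ (-p)) (g' s * s ^ (-p) + g s * (-p * s ^ (-p - 1))) s :=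
    fun s hs => (hg s hs).mul (Real.hasDerivAt_rpow_const (Or.inl hs.ne'))
  refine antitoneOn_of_deriv_nonpos (convex_Ioi 0)
    (fun s hs => (hd s hs).continuousAt.continuousWithinAt) ?_ ?_
  · rw [interior_Ioi]
    exact fun s hs => (hd s hs).differentiableAt.differentiableWithinAt
  · rw [interior_Ioi]
    intro s hs
    have hs' : 0 < s := hs
    rw [(hd s hs).deriv]
    have h : s ^ (-p) = s * s ^ (-p - 1) := by
      rw [Real.rpow_sub_one hs'.ne']
      field_simp
    rw [h]
    nlinarith [hp s hs, Real.rpow_pos_of_pos hs' (-p - 1)]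

/-- Doubling-type estimate: `g` loses at most the factor `4 ^ p` when its argument is divided
by `4`. -/
lemma rpow_neg_mul_le_div_four {g g' : ℝ → ℝ} {p : ℝ}
    (hg : ∀ s, 0 < s → HasDerivAt g (g' s) s) (hp : ∀ s, 0 < s → s * g' s ≤ p * g s)
    {s : ℝ} (hs : 0 < s) : (4 : ℝ) ^ (-p) * g s ≤ g (s / 4) := by
  have hs4 : 0 < s / 4 := by positivity
  have h := antitoneOn_mul_rpow_neg hg hp (mem_Ioi.2 hs4) (mem_Ioi.2 hs) (by linarith)
  have hpow : s ^ (-p) = 4 ^ (-p) * (s / 4) ^ (-p) := by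
    rw [← Real.mul_rpow (by norm_num) hs4.le]
    congr 1
    ring
  simp only [hpow] at h
  have hpos := Real.rpow_pos_of_pos hs4 (-p)
  refine le_of_mul_le_mul_right ?_ hpos
  linarith

section InnerProductSpace

variable {E : Type*} [NormedAddCommGroup E] [InnerProductSpace ℝ E]

/-- A derivative that is positive semidefinite away from the origin is so everywhere. -/
lemma inner_fderiv_nonneg {A : E → E} (hA : ContDiff ℝ 1 A)
    (h : ∀ ξ, ξ ≠ 0 → ∀ ζ, 0 ≤ ⟪fderiv ℝ A ξ ζ, ζ⟫) (ξ ζ : E) :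
    0 ≤ ⟪fderiv ℝ A ξ ζ, ζ⟫ := by
  rcases subsingleton_or_nontrivial E with hE | hE
  · simp [Subsingleton.elim ζ 0]
  have : (nhdsWithin (0 : E) {0}ᶜ).NeBot := Module.punctured_nhds_neBot ℝ E 0
  have hcont : Continuous fun ξ => ⟪fderiv ℝ A ξ ζ, ζ⟫ :=
    ((hA.continuous_fderiv one_ne_zero).clm_apply continuous_const).inner continuous_const
  have hclosed : IsClosed {ξ | 0 ≤ ⟪fderiv ℝ A ξ ζ, ζ⟫} := isClosed_le continuous_const hcont
  exact hclosed.closure_subset_iff.2 (fun ξ hξ => h ξ hξ ζ) (dense_compl_singleton (0 : E) ξ)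

/-- If the derivative of `A` is positive semidefinite, and bounded below by `m` in the direction
`ξ₁ - ξ₂` on the quarter of the segment `[ξ₂, ξ₁]` next to `ξ₁`, then
`m / 4 ≤ ⟪A ξ₁ - A ξ₂, ξ₁ - ξ₂⟫`. -/
lemma quarter_le_inner_sub {A : E → E} (hA : Differentiable ℝ A)
    (h0 : ∀ ξ ζ, 0 ≤ ⟪fderiv ℝ A ξ ζ, ζ⟫) (ξ₁ ξ₂ : E) {m : ℝ}
    (hm : ∀ t : ℝ, 3 / 4 ≤ t → t ≤ 1 →
      m ≤ ⟪fderiv ℝ A (ξ₂ + t • (ξ₁ - ξ₂)) (ξ₁ - ξ₂), ξ₁ - ξ₂⟫) :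
    m / 4 ≤ ⟪A ξ₁ - A ξ₂, ξ₁ - ξ₂⟫ := by
  set d := ξ₁ - ξ₂ with hd
  have hder : ∀ t : ℝ, HasDerivAt (fun t : ℝ => ⟪A (ξ₂ + t • d), d⟫)
      ⟪fderiv ℝ A (ξ₂ + t • d) d, d⟫ t := by
    intro t
    have hγ : HasDerivAt (fun t : ℝ => ξ₂ + t • d) d t := by
      simpa using ((hasDerivAt_id t).smul_const d).const_add ξ₂
    simpa using ((hA _).hasFDerivAt.comp_hasDerivAt t hγ).inner ℝ (hasDerivAt_const t d)
  have hmono : Monotone fun t : ℝ => ⟪A (ξ₂ + t • d), d⟫ :=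
    monotone_of_deriv_nonneg (fun t => (hder t).differentiableAt)
      (fun t => by rw [(hder t).deriv]; exact h0 _ _)
  have hfirst := hmono (show (0 : ℝ) ≤ 3 / 4 by norm_num)
  have hlast := (convex_Icc (3 / 4 : ℝ) 1).mul_sub_le_image_sub_of_le_deriv
    (f := fun t : ℝ => ⟪A (ξ₂ + t • d), d⟫) (C := m)
    (fun t _ => (hder t).continuousAt.continuousWithinAt)
    (fun t _ => (hder t).differentiableAt.differentiableWithinAt)
    (fun t ht => by
      have ht' := interior_subset ht
      rw [(hder t).deriv]
      exact hm t ht'.1 ht'.2)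
    (3 / 4) (by norm_num) 1 (by norm_num) (by norm_num)
  have h1 : ξ₂ + (1 : ℝ) • d = ξ₁ := by simp [hd]
  simp only [zero_smul, add_zero, h1] at hfirst hlast
  rw [inner_sub_left]
  linarith

/-- On the quarter of the segment `[ξ₂, ξ₁]` next to its longer endpoint `ξ₁`, the norm is
comparable to `‖ξ₁‖ + ‖ξ₂‖`. -/
lemma norm_segment_bounds {ξ₁ ξ₂ : E} (hle : ‖ξ₂‖ ≤ ‖ξ₁‖) {t : ℝ} (ht : 3 / 4 ≤ t) (ht1 : t ≤ 1) :
    (‖ξ₁‖ + ‖ξ₂‖) / 4 ≤ ‖ξ₂ + t • (ξ₁ - ξ₂)‖ ∧ ‖ξ₂ + t • (ξ₁ - ξ₂)‖ ≤ ‖ξ₁‖ + ‖ξ₂‖ := by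
  have hγ : ξ₂ + t • (ξ₁ - ξ₂) = t • ξ₁ + (1 - t) • ξ₂ := by module
  have h1 : ‖t • ξ₁‖ = t * ‖ξ₁‖ := norm_smul_of_nonneg (by linarith) _
  have h2 : ‖(1 - t) • ξ₂‖ = (1 - t) * ‖ξ₂‖ := norm_smul_of_nonneg (by linarith) _
  have hlow := norm_sub_le_norm_add (t • ξ₁) ((1 - t) • ξ₂)
  have hupp := norm_add_le (t • ξ₁) ((1 - t) • ξ₂)
  rw [hγ]
  rw [h1, h2] at hlow hupp
  constructor <;> nlinarith [norm_nonneg ξ₁, norm_nonneg ξ₂]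

/-- Strict monotonicity with an explicit constant, when `ξ₁` is the longer vector. -/
lemma strict_monotonicity_of_norm_le {g g' : ℝ → ℝ} {p ν : ℝ} (hp0 : 0 < p) (hν : 0 < ν)
    (hpos : ∀ s, 0 < s → 0 < g s) (hg : ∀ s, 0 < s → HasDerivAt g (g' s) s)
    (hg' : ∀ s, 0 < s → 0 ≤ g' s) (hp : ∀ s, 0 < s → s * g' s ≤ p * g s)
    {A : E → E} (hA : ContDiff ℝ 1 A)
    (hell : ∀ ξ, ξ ≠ 0 → ∀ ζ, ν * (g ‖ξ‖ / ‖ξ‖) * ‖ζ‖ ^ 2 ≤ ⟪fderiv ℝ A ξ ζ, ζ⟫)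
    {ξ₁ ξ₂ : E} (hS : 0 < ‖ξ₁‖ + ‖ξ₂‖) (hle : ‖ξ₂‖ ≤ ‖ξ₁‖) :
    ν * 4 ^ (-p) / (4 * p) * g' (‖ξ₁‖ + ‖ξ₂‖) * ‖ξ₁ - ξ₂‖ ^ 2 ≤ ⟪A ξ₁ - A ξ₂, ξ₁ - ξ₂⟫ := by
  have hmono : MonotoneOn g (Ioi 0) := by
    refine monotoneOn_of_deriv_nonneg (convex_Ioi 0)
      (fun s hs => (hg s hs).continuousAt.continuousWithinAt) ?_ ?_ <;> rw [interior_Ioi]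
    · exact fun s hs => (hg s hs).differentiableAt.differentiableWithinAt
    · exact fun s hs => by rw [(hg s hs).deriv]; exact hg' s hs
  have h0 := inner_fderiv_nonneg hA fun ξ hξ ζ => le_trans
    (by have := hpos _ (norm_pos_iff.2 hξ); positivity) (hell ξ hξ ζ)
  set S := ‖ξ₁‖ + ‖ξ₂‖ with hSdef
  have hmain := quarter_le_inner_sub (hA.differentiable one_ne_zero) h0 ξ₁ ξ₂
    (m := ν * (4 ^ (-p) * g' S / p) * ‖ξ₁ - ξ₂‖ ^ 2) (by
      intro t ht ht1
      obtain ⟨hlow, hupp⟩ := norm_segment_bounds hle ht ht1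
      rw [← hSdef] at hlow hupp
      set ξ := ξ₂ + t • (ξ₁ - ξ₂)
      have hξ : 0 < ‖ξ‖ := by linarith
      refine le_trans ?_ (hell ξ (norm_pos_iff.1 hξ) _)
      have hgξ : 4 ^ (-p) * g S ≤ g ‖ξ‖ := (rpow_neg_mul_le_div_four hg hp hS).trans
        (hmono (mem_Ioi.2 (by positivity)) (mem_Ioi.2 hξ) hlow)
      have h4 : (0 : ℝ) < 4 ^ (-p) := by positivity
      have hbound : 4 ^ (-p) * g' S / p ≤ g ‖ξ‖ / ‖ξ‖ := by
        rw [div_le_div_iff₀ hp0 hξ]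
        calc 4 ^ (-p) * g' S * ‖ξ‖ ≤ 4 ^ (-p) * g' S * S :=
              mul_le_mul_of_nonneg_left hupp (mul_nonneg h4.le (hg' S hS))
          _ = 4 ^ (-p) * (S * g' S) := by ring
          _ ≤ 4 ^ (-p) * (p * g S) := mul_le_mul_of_nonneg_left (hp S hS) h4.le
          _ = 4 ^ (-p) * g S * p := by ring
          _ ≤ g ‖ξ‖ * p := mul_le_mul_of_nonneg_right hgξ hp0.le
      gcongr)
  refine le_of_eq_of_le ?_ hmain
  field_simp

end InnerProductSpace

/-- Strict monotonicity: there exists a constant `c > 0`, depending only on `g₀, g₁, ν`,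
such that for all `ξ₁, ξ₂` with `|ξ₁| + |ξ₂| > 0`,
`⟨𝒜(ξ₁) − 𝒜(ξ₂), ξ₁ − ξ₂⟩ ≥ c·g′(|ξ₁| + |ξ₂|)·|ξ₁ − ξ₂|²`. -/
theorem strict_monotonicity_of_vector_field
    (g₀ g₁ ν : ℝ) (hg₀ : 1 < g₀) (hg01 : g₀ ≤ g₁) (hν : 0 < ν) (hν1 : ν ≤ 1) :
    ∃ c : ℝ, 0 < c ∧
      ∀ (n : ℕ), 2 ≤ n →
      ∀ (g g' : ℝ → ℝ),
        (∀ s, 0 < s → 0 < g s) →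
        (∀ s, 0 < s → HasDerivAt g (g' s) s) →
        ContinuousOn g' (Set.Ioi 0) →
        (∀ s, 0 < s → (g₀ - 1) * g s ≤ s * g' s ∧ s * g' s ≤ (g₁ - 1) * g s) →
      ∀ (L : ℝ), 1 ≤ L →
      ∀ (A : EuclideanSpace ℝ (Fin n) → EuclideanSpace ℝ (Fin n)),
        ContDiff ℝ 1 A → A 0 = 0 →
        (∀ ξ : EuclideanSpace ℝ (Fin n), ξ ≠ 0 →
          ∀ ζ : EuclideanSpace ℝ (Fin n),
            ν * (g ‖ξ‖ / ‖ξ‖) * ‖ζ‖ ^ 2 ≤ ⟪fderiv ℝ A ξ ζ, ζ⟫) →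
        (∀ ξ : EuclideanSpace ℝ (Fin n), ξ ≠ 0 →
          ‖fderiv ℝ A ξ‖ ≤ L * (g ‖ξ‖ / ‖ξ‖)) →
      ∀ ξ₁ ξ₂ : EuclideanSpace ℝ (Fin n), 0 < ‖ξ₁‖ + ‖ξ₂‖ →
        c * g' (‖ξ₁‖ + ‖ξ₂‖) * ‖ξ₁ - ξ₂‖ ^ 2 ≤ ⟪A ξ₁ - A ξ₂, ξ₁ - ξ₂⟫ := by
  have hp0 : 0 < g₁ - 1 := by linarith
  refine ⟨ν * 4 ^ (-(g₁ - 1)) / (4 * (g₁ - 1)), by positivity, ?_⟩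
  intro n _ g g' hpos hg _ hO L _ A hA _ hell _ ξ₁ ξ₂ hS
  have hg' : ∀ s, 0 < s → 0 ≤ g' s := fun s hs =>
    nonneg_of_mul_nonneg_right
      ((mul_nonneg (by linarith) (hpos s hs).le).trans (hO s hs).1) hs
  have hp := fun s hs => (hO s hs).2
  rcases le_total ‖ξ₂‖ ‖ξ₁‖ with hle | hle
  · exact strict_monotonicity_of_norm_le hp0 hν hpos hg hg' hp hA hell hS hle
  · have h := strict_monotonicity_of_norm_le hp0 hν hpos hg hg' hp hA hell
      (by rwa [add_comm]) hle
    rwa [add_comm ‖ξ₂‖, norm_sub_rev, ← neg_sub (A ξ₁), ← neg_sub ξ₁, inner_neg_neg] at h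
end

section
/- There exists a constant c > 0, depending only on g₀ and g₁, such that for all ξ₁, ξ₂ ∈ ℝⁿ with |ξ₁| + |ξ₂| > 0 one has |V_g(ξ₁) − V_g(ξ₂)|² ≤ c·g′(|ξ₁| + |ξ₂|)·|ξ₁ − ξ₂|². -/
open Real MeasureTheory Set Filter

/-- Difference of two rescaled vectors, controlled by the difference of the vectors and the
difference of the rescaled norms. -/
lemma norm_smul_sub_smul_le {E : Type*} [NormedAddCommGroup E] [NormedSpace ℝ E]
    {p : ℝ} (hp : 0 ≤ p) (q : ℝ) (x y : E) :
    ‖p • x - q • y‖ ≤ 2 * p * ‖x - y‖ + |p * ‖x‖ - q * ‖y‖| := by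
  have hsplit : p • x - q • y = p • (x - y) + (p - q) • y := by module
  have hnorm : p * |‖x‖ - ‖y‖| ≤ p * ‖x - y‖ :=
    mul_le_mul_of_nonneg_left (abs_norm_sub_norm_le x y) hp
  have hrad : |p - q| * ‖y‖ ≤ |p * ‖x‖ - q * ‖y‖| + p * |‖x‖ - ‖y‖| := by
    have h : (p - q) * ‖y‖ = (p * ‖x‖ - q * ‖y‖) - p * (‖x‖ - ‖y‖) := by ring
    calc |p - q| * ‖y‖ = |(p - q) * ‖y‖| := by rw [abs_mul, abs_norm]
      _ ≤ |p * ‖x‖ - q * ‖y‖| + |p * (‖x‖ - ‖y‖)| := h ▸ abs_sub _ _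
      _ = _ := by rw [abs_mul p, abs_of_nonneg hp]
  calc ‖p • x - q • y‖ ≤ ‖p • (x - y)‖ + ‖(p - q) • y‖ := hsplit ▸ norm_add_le _ _
    _ = p * ‖x - y‖ + |p - q| * ‖y‖ := by
      rw [norm_smul, norm_smul, Real.norm_of_nonneg hp, Real.norm_eq_abs]
    _ ≤ _ := by linarith

/-- A function on `(0, ∞)` with nonnegative derivative is monotone there. -/
lemma monotoneOn_Ioi_of_hasDerivAt_nonneg {g g' : ℝ → ℝ}
    (hd : ∀ s, 0 < s → HasDerivAt g (g' s) s) (hg' : ∀ s, 0 < s → 0 ≤ g' s) :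
    MonotoneOn g (Set.Ioi 0) := by
  refine monotoneOn_of_deriv_nonneg (convex_Ioi 0)
    (fun s hs => (hd s hs).continuousAt.continuousWithinAt)
    (fun s hs => ?_) (fun s hs => ?_) <;> rw [interior_Ioi] at hs
  · exact (hd s hs).differentiableAt.differentiableWithinAt
  · rw [(hd s hs).deriv]; exact hg' s hs

/-- If `g` is monotone and `s g'(s) ≤ (k - 1) g(s)`, then `s g(s)` has slope at most `k g(a)`
on `(0, a]`. -/
lemma mul_self_sub_le_of_mul_deriv_le {g g' : ℝ → ℝ} {k a b : ℝ} (hk : 0 ≤ k)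
    (hd : ∀ s, 0 < s → HasDerivAt g (g' s) s) (hmono : MonotoneOn g (Set.Ioi 0))
    (hup : ∀ s, 0 < s → s * g' s ≤ (k - 1) * g s) (hb : 0 < b) (hba : b ≤ a) :
    a * g a - b * g b ≤ k * g a * (a - b) := by
  rcases hba.eq_or_lt with rfl | hlt
  · simp
  have hder : ∀ s, 0 < s → HasDerivAt (fun t => t * g t) (1 * g s + s * g' s) s :=
    fun s hs => (hasDerivAt_id s).mul (hd s hs)
  obtain ⟨t, ht, hslope⟩ := exists_hasDerivAt_eq_slope (fun t => t * g t) _ hlt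
    (fun s hs => (hder s (hb.trans_le hs.1)).continuousAt.continuousWithinAt)
    (fun s hs => hder s (hb.trans hs.1))
  have ht0 : 0 < t := hb.trans ht.1
  have hgt : g t ≤ g a := hmono ht0 (hb.trans hlt) ht.2.le
  rw [eq_div_iff (sub_pos.2 hlt).ne'] at hslope
  rw [← hslope]
  refine mul_le_mul_of_nonneg_right ?_ (sub_pos.2 hlt).le
  linarith [hup t ht0, mul_le_mul_of_nonneg_left hgt hk]

/-- Lipschitz-type bound for the radial profile `s ↦ √(g(s)/s) s`. -/
lemma abs_sqrt_div_mul_sub_le {g g' : ℝ → ℝ} {k a b : ℝ} (hk : 1 ≤ k)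
    (hpos : ∀ s, 0 < s → 0 < g s)
    (hd : ∀ s, 0 < s → HasDerivAt g (g' s) s) (hmono : MonotoneOn g (Set.Ioi 0))
    (hup : ∀ s, 0 < s → s * g' s ≤ (k - 1) * g s) (ha : 0 < a) (hb : 0 ≤ b) (hba : b ≤ a) :
    |√(g a / a) * a - √(g b / b) * b| ≤ k * √(g a / a) * (a - b) := by
  have hP : 0 < √(g a / a) := Real.sqrt_pos.2 (div_pos (hpos a ha) ha)
  rcases hb.eq_or_lt with rfl | hb
  · have : 0 < √(g a / a) * a := mul_pos hP ha
    rw [mul_zero, sub_zero, sub_zero, abs_of_pos this]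
    nlinarith
  have hQ : 0 < √(g b / b) := Real.sqrt_pos.2 (div_pos (hpos b hb) hb)
  have hP2 : √(g a / a) ^ 2 * a = g a := by
    rw [Real.sq_sqrt (div_pos (hpos a ha) ha).le, div_mul_cancel₀ _ ha.ne']
  have hQ2 : √(g b / b) ^ 2 * b = g b := by
    rw [Real.sq_sqrt (div_pos (hpos b hb) hb).le, div_mul_cancel₀ _ hb.ne']
  have hslope := mul_self_sub_le_of_mul_deriv_le (by linarith) hd hmono hup hb hba
  have hle : b * g b ≤ a * g a :=
    mul_le_mul hba (hmono hb ha hba) (hpos b hb).le ha.le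
  rw [← hP2, ← hQ2] at hle
  rw [← hQ2, ← hP2] at hslope
  generalize √(g a / a) = P at *
  generalize √(g b / b) = Q at *
  have hPa : 0 < P * a := mul_pos hP ha
  have hQb : 0 < Q * b := mul_pos hQ hb
  have hord : Q * b ≤ P * a := abs_le_of_sq_le_sq' (by linarith) hPa.le |>.2
  rw [abs_of_nonneg (sub_nonneg.2 hord)]
  refine le_of_mul_le_mul_right ?_ hPa
  have : 0 ≤ (P * a - Q * b) * (Q * b) := mul_nonneg (sub_nonneg.2 hord) hQb.le
  linarith

/-- There exists a constant `c > 0`, depending only on `g₀` and `g₁`, such that for all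
`ξ₁, ξ₂` with `|ξ₁| + |ξ₂| > 0`, `|V_g(ξ₁) − V_g(ξ₂)|² ≤ c·g′(|ξ₁| + |ξ₂|)·|ξ₁ − ξ₂|²`,
where `V_g(ξ) = (g(|ξ|)/|ξ|)^{1/2}·ξ` for `ξ ≠ 0` and `V_g(0) = 0`. -/
theorem Vg_difference_estimate
    (g₀ g₁ : ℝ) (hg₀ : 1 < g₀) (hg01 : g₀ ≤ g₁) :
    ∃ c : ℝ, 0 < c ∧
      ∀ (n : ℕ), 2 ≤ n →
      ∀ (g g' : ℝ → ℝ),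
        (∀ s, 0 < s → 0 < g s) →
        (∀ s, 0 < s → HasDerivAt g (g' s) s) →
        ContinuousOn g' (Set.Ioi 0) →
        (∀ s, 0 < s → (g₀ - 1) * g s ≤ s * g' s ∧ s * g' s ≤ (g₁ - 1) * g s) →
      ∀ (V : EuclideanSpace ℝ (Fin n) → EuclideanSpace ℝ (Fin n)),
        V 0 = 0 →
        (∀ ξ : EuclideanSpace ℝ (Fin n), ξ ≠ 0 →
          V ξ = (g ‖ξ‖ / ‖ξ‖) ^ ((1:ℝ)/2) • ξ) →
      ∀ ξ₁ ξ₂ : EuclideanSpace ℝ (Fin n), 0 < ‖ξ₁‖ + ‖ξ₂‖ →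
        ‖V ξ₁ - V ξ₂‖ ^ 2 ≤ c * g' (‖ξ₁‖ + ‖ξ₂‖) * ‖ξ₁ - ξ₂‖ ^ 2 := by
  have hδ : 0 < g₀ - 1 := by linarith
  have hg₁ : 0 < g₁ := by linarith
  refine ⟨2 * (2 + g₁) ^ 2 / (g₀ - 1), by positivity, ?_⟩
  intro n _ g g' hpos hd _ hO V hV0 hV
  have hVeq : ∀ ξ, V ξ = √(g ‖ξ‖ / ‖ξ‖) • ξ := fun ξ => by
    rcases eq_or_ne ξ 0 with rfl | h
    · rw [hV0, smul_zero]
    · rw [hV ξ h, Real.sqrt_eq_rpow]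
  have hmono : MonotoneOn g (Set.Ioi 0) :=
    monotoneOn_Ioi_of_hasDerivAt_nonneg hd fun s hs =>
      nonneg_of_mul_nonneg_right ((mul_pos hδ (hpos s hs)).le.trans (hO s hs).1) hs
  intro ξ₁ ξ₂ hsum
  wlog hle : ‖ξ₂‖ ≤ ‖ξ₁‖ generalizing ξ₁ ξ₂
  · rw [norm_sub_rev (V ξ₁), norm_sub_rev ξ₁, add_comm ‖ξ₁‖]
    exact this ξ₂ ξ₁ (by linarith) (le_of_not_ge hle)
  have ha : 0 < ‖ξ₁‖ := by linarith
  have hprofile := abs_sqrt_div_mul_sub_le (by linarith) hpos hd hmono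
    (fun s hs => (hO s hs).2) ha (norm_nonneg ξ₂) hle
  have hP := Real.sqrt_nonneg (g ‖ξ₁‖ / ‖ξ₁‖)
  have hP2 := Real.sq_sqrt (div_pos (hpos _ ha) ha).le
  have hdiff : ‖V ξ₁ - V ξ₂‖ ≤ (2 + g₁) * √(g ‖ξ₁‖ / ‖ξ₁‖) * ‖ξ₁ - ξ₂‖ := by
    rw [hVeq, hVeq]
    have h := norm_smul_sub_smul_le hP √(g ‖ξ₂‖ / ‖ξ₂‖) ξ₁ ξ₂
    have : g₁ * √(g ‖ξ₁‖ / ‖ξ₁‖) * (‖ξ₁‖ - ‖ξ₂‖) ≤ g₁ * √(g ‖ξ₁‖ / ‖ξ₁‖) * ‖ξ₁ - ξ₂‖ :=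
      mul_le_mul_of_nonneg_left (norm_sub_norm_le _ _) (mul_nonneg (by linarith) hP)
    linarith
  have hcoef : g ‖ξ₁‖ / ‖ξ₁‖ ≤ 2 / (g₀ - 1) * g' (‖ξ₁‖ + ‖ξ₂‖) := by
    have hlow := (hO _ hsum).1
    have hmon : g ‖ξ₁‖ ≤ g (‖ξ₁‖ + ‖ξ₂‖) :=
      hmono ha hsum (le_add_of_nonneg_right (norm_nonneg _))
    have hg' : 0 ≤ g' (‖ξ₁‖ + ‖ξ₂‖) :=
      nonneg_of_mul_nonneg_right ((mul_pos hδ (hpos _ hsum)).le.trans hlow) hsum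
    rw [div_mul_eq_mul_div, div_le_div_iff₀ ha hδ]
    linarith [mul_le_mul_of_nonneg_left hmon hδ.le, mul_le_mul_of_nonneg_right hle hg']
  calc ‖V ξ₁ - V ξ₂‖ ^ 2 ≤ ((2 + g₁) * √(g ‖ξ₁‖ / ‖ξ₁‖) * ‖ξ₁ - ξ₂‖) ^ 2 :=
        pow_le_pow_left₀ (norm_nonneg _) hdiff 2
    _ = (2 + g₁) ^ 2 * (g ‖ξ₁‖ / ‖ξ₁‖) * ‖ξ₁ - ξ₂‖ ^ 2 := by rw [mul_pow, mul_pow, hP2]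
    _ ≤ (2 + g₁) ^ 2 * (2 / (g₀ - 1) * g' (‖ξ₁‖ + ‖ξ₂‖)) * ‖ξ₁ - ξ₂‖ ^ 2 := by gcongr
    _ = _ := by ring
end

section
/- (Poincaré's inequality in Orlicz form) Let Ω ⊂ ℝⁿ be a bounded open set with diameter diam(Ω) > 0. Then for every smooth compactly supported function u ∈ C_c^∞(Ω) one has ∫_Ω G(|u(x)|/diam(Ω)) dx ≤ ∫_Ω G(|Du(x)|) dx, where Du denotes the gradient of u. -/
open Real MeasureTheory Set Filter

/-- The primitive from `0` of a function that is continuous, positive and nondecreasing on `(0, ∞)`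
is continuous, convex and nondecreasing on `[0, ∞)`. -/
lemma primitive_continuousOn_convexOn_monotoneOn {g G : ℝ → ℝ}
    (hpos : ∀ s, 0 < s → 0 < g s) (hcont : ContinuousOn g (Ioi 0)) (hmono : MonotoneOn g (Ioi 0))
    (hG : ∀ s, G s = ∫ r in (0 : ℝ)..s, g r) :
    ContinuousOn G (Ici 0) ∧ ConvexOn ℝ (Ici 0) G ∧ MonotoneOn G (Ici 0) := by
  set h : ℝ → ℝ := (Ioi (0 : ℝ)).indicator g
  have hh : ∀ s, 0 < s → h s = g s := fun s hs => indicator_of_mem (mem_Ioi.2 hs) g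
  have h0 : ∀ s, s ≤ 0 → h s = 0 := fun s hs => indicator_of_notMem (notMem_Ioi.2 hs) g
  have h_mono : Monotone h := by
    intro a b hab
    rcases le_or_gt a 0 with ha | ha
    · rw [h0 a ha]
      exact indicator_nonneg (fun s hs => (hpos s hs).le) b
    · rw [hh a ha, hh b (ha.trans_le hab)]
      exact hmono ha (ha.trans_le hab) hab
  have h_int : ∀ a b, IntervalIntegrable h volume a b := fun a b => h_mono.intervalIntegrable
  have hGh : EqOn G (fun s => ∫ r in (0 : ℝ)..s, h r) (Ici 0) := by
    intro s hs
    rw [hG]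
    refine intervalIntegral.integral_congr_ae (Eventually.of_forall fun r hr => ?_)
    rw [uIoc_of_le hs] at hr
    exact (hh r hr.1).symm
  have hG_cont : ContinuousOn G (Ici 0) :=
    (intervalIntegral.continuous_primitive h_int 0).continuousOn.congr hGh
  have hG_deriv : ∀ s, 0 < s → HasDerivAt G (g s) s := by
    intro s hs
    have hcs : ContinuousAt h s :=
      (hcont.continuousAt (Ioi_mem_nhds hs)).congr
        (eventually_of_mem (Ioi_mem_nhds hs) fun r hr => (hh r hr).symm)
    have hd := intervalIntegral.integral_hasDerivAt_right (h_int 0 s)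
      h_mono.measurable.stronglyMeasurable.stronglyMeasurableAtFilter hcs
    rw [hh s hs] at hd
    exact hd.congr_of_eventuallyEq
      (eventually_of_mem (Ioi_mem_nhds hs) fun r hr => hGh (mem_Ici.2 (le_of_lt hr)))
  refine ⟨hG_cont, ?_, ?_⟩
  · refine MonotoneOn.convexOn_of_deriv (convex_Ici 0) hG_cont ?_ ?_
    · rw [interior_Ici]
      exact fun s hs => (hG_deriv s hs).differentiableAt.differentiableWithinAt
    · rw [interior_Ici]
      exact hmono.congr fun s hs => (hG_deriv s hs).deriv.symm
  · refine monotoneOn_of_deriv_nonneg (convex_Ici 0) hG_cont ?_ ?_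
    · rw [interior_Ici]
      exact fun s hs => (hG_deriv s hs).differentiableAt.differentiableWithinAt
    · rw [interior_Ici]
      exact fun s hs => (hG_deriv s hs).deriv ▸ (hpos s hs).le

/-- If a `C¹` function vanishes at `x - d • e` with `e` a unit vector, then `|u x|` is at most the
integral of `‖Du‖` along the segment from `x - d • e` to `x`. -/
lemma abs_le_integral_norm_fderiv_segment {E : Type*} [NormedAddCommGroup E] [NormedSpace ℝ E]
    {u : E → ℝ} (hu : ContDiff ℝ 1 u) {e x : E} (he : ‖e‖ = 1) {d : ℝ} (hd : 0 ≤ d)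
    (hx : u (x - d • e) = 0) :
    |u x| ≤ ∫ t in (0 : ℝ)..d, ‖fderiv ℝ u (x - t • e)‖ := by
  have hDu : Continuous (fderiv ℝ u) := hu.continuous_fderiv one_ne_zero
  have hderiv : ∀ t : ℝ,
      HasDerivAt (fun t : ℝ => u (x - t • e)) (fderiv ℝ u (x - t • e) (-e)) t := by
    intro t
    have hline : HasDerivAt (fun t : ℝ => x - t • e) (-e) t := by
      simpa using ((hasDerivAt_id t).smul_const e).const_sub x
    exact ((hu.differentiable one_ne_zero _).hasFDerivAt).comp_hasDerivAt t hline
  have hftc := intervalIntegral.integral_eq_sub_of_hasDerivAt (a := 0) (b := d)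
    (fun t _ => hderiv t) (Continuous.intervalIntegrable (by fun_prop) _ _)
  have hux : |u x| = ‖∫ t in (0 : ℝ)..d, fderiv ℝ u (x - t • e) (-e)‖ := by
    rw [hftc]
    simp [hx]
  rw [hux]
  refine intervalIntegral.norm_integral_le_of_norm_le hd (Eventually.of_forall fun t _ => ?_)
    (Continuous.intervalIntegrable (by fun_prop) _ _)
  simpa [he] using (fderiv ℝ u (x - t • e)).le_opNorm (-e)

/-- Jensen's inequality on an interval. -/
lemma map_integral_div_le_integral_div {G f : ℝ → ℝ} (hGc : ContinuousOn G (Ici 0))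
    (hGconv : ConvexOn ℝ (Ici 0) G) (hf : Continuous f) (hf0 : ∀ t, 0 ≤ f t) {d : ℝ} (hd : 0 < d) :
    G ((∫ t in (0 : ℝ)..d, f t) / d) ≤ (∫ t in (0 : ℝ)..d, G (f t)) / d := by
  have hGf : Continuous fun t => G (f t) := hGc.comp_continuous hf hf0
  have hJ := hGconv.map_set_average_le (μ := volume) (t := Ioc 0 d) (f := f) hGc isClosed_Ici
    (by simpa using hd) (by simp) (Eventually.of_forall hf0)
    (hf.integrableOn_Ioc) (hGf.integrableOn_Ioc)
  simpa [setAverage_eq, intervalIntegral.integral_of_le hd.le, hd.le, div_eq_inv_mul] using hJ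

/-- A point of an open bounded set moved by its diameter in a unit direction leaves the set. -/
lemma sub_diam_smul_notMem {E : Type*} [NormedAddCommGroup E] [NormedSpace ℝ E] {Ω : Set E}
    (hΩ : IsOpen Ω) (hb : Bornology.IsBounded Ω) {e x : E} (he : ‖e‖ = 1) (hx : x ∈ Ω) :
    x - Metric.diam Ω • e ∉ Ω := by
  intro hy
  obtain ⟨ε, hε, hball⟩ := Metric.isOpen_iff.1 hΩ x hx
  have hz : x + (ε / 2) • e ∈ Ω := hball (by
    simp [norm_smul, he, abs_of_pos hε, hε])
  have hdist := Metric.dist_le_diam_of_mem hb hz hy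
  have hsub : x + (ε / 2) • e - (x - Metric.diam Ω • e) = (ε / 2 + Metric.diam Ω) • e := by
    module
  rw [dist_eq_norm, hsub, norm_smul, he, mul_one, Real.norm_of_nonneg
    (by have := Metric.diam_nonneg (s := Ω); positivity)] at hdist
  linarith

/-- Averaging a continuous compactly supported function along a direction preserves its
integral. -/
lemma integral_integral_sub_smul {E : Type*} [NormedAddCommGroup E] [NormedSpace ℝ E]
    [FiniteDimensional ℝ E] [MeasurableSpace E] [BorelSpace E] (μ : Measure E)
    [μ.IsAddHaarMeasure] {H : E → ℝ} (hH : Continuous H) (hs : HasCompactSupport H) (e : E)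
    {d : ℝ} (hd : 0 ≤ d) :
    Integrable (fun x => ∫ t in (0 : ℝ)..d, H (x - t • e)) μ ∧
      ∫ x, (∫ t in (0 : ℝ)..d, H (x - t • e)) ∂μ = d * ∫ x, H x ∂μ := by
  have hint : Integrable H μ := hH.integrable_of_hasCompactSupport hs
  have hprod : Integrable (fun p : E × ℝ => H (p.1 - p.2 • e))
      (μ.prod (volume.restrict (Ioc 0 d))) := by
    refine (integrable_prod_iff' (Continuous.aestronglyMeasurable (by fun_prop))).2 ⟨?_, ?_⟩
    · exact Eventually.of_forall fun t => hint.comp_sub_right (t • e)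
    · simp_rw [integral_sub_right_eq_self (fun x => ‖H x‖)]
      exact integrable_const _
  simp_rw [intervalIntegral.integral_of_le hd]
  refine ⟨hprod.integral_prod_left, ?_⟩
  rw [integral_integral_swap hprod]
  simp_rw [integral_sub_right_eq_self H]
  simp [hd]

/-- Poincaré's inequality in Orlicz form on an open bounded subset of a finite-dimensional space,
for a convex nondecreasing `G` on `[0, ∞)` with `G 0 = 0`. -/
lemma poincare_inequality_of_convexOn {E : Type*} [NormedAddCommGroup E] [NormedSpace ℝ E]
    [FiniteDimensional ℝ E] [Nontrivial E] [MeasurableSpace E] [BorelSpace E] (μ : Measure E)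
    [μ.IsAddHaarMeasure] {G : ℝ → ℝ} (hGc : ContinuousOn G (Ici 0))
    (hGconv : ConvexOn ℝ (Ici 0) G) (hGmono : MonotoneOn G (Ici 0)) (hG0 : G 0 = 0)
    {Ω : Set E} (hΩ : IsOpen Ω) (hb : Bornology.IsBounded Ω) (hdiam : 0 < Metric.diam Ω)
    {u : E → ℝ} (hu : ContDiff ℝ 1 u) (hu_supp : HasCompactSupport u) (hsupp : tsupport u ⊆ Ω) :
    ∫ x in Ω, G (|u x| / Metric.diam Ω) ∂μ ≤ ∫ x in Ω, G ‖fderiv ℝ u x‖ ∂μ := by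
  obtain ⟨e, he⟩ := exists_norm_eq E zero_le_one
  set d := Metric.diam Ω
  have hDu : Continuous (fderiv ℝ u) := hu.continuous_fderiv one_ne_zero
  have huc : Continuous u := hu.continuous
  have hu0 : ∀ x, x ∉ Ω → u x = 0 := fun x hx =>
    image_eq_zero_of_notMem_tsupport fun h => hx (hsupp h)
  have hDu0 : ∀ x, x ∉ Ω → fderiv ℝ u x = 0 := fun x hx =>
    image_eq_zero_of_notMem_tsupport fun h => hx (hsupp (tsupport_fderiv_subset ℝ h))
  have hG_nonneg : ∀ s, 0 ≤ s → 0 ≤ G s := fun s hs =>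
    hG0 ▸ hGmono (mem_Ici.2 le_rfl) hs hs
  set H : E → ℝ := fun x => G ‖fderiv ℝ u x‖
  have hH : Continuous H := hGc.comp_continuous hDu.norm fun x => norm_nonneg _
  have hHs : HasCompactSupport H :=
    (hu_supp.fderiv ℝ).comp_left (g := fun L => G ‖L‖) (by simp [hG0])
  have hU : Continuous fun x => G (|u x| / d) :=
    hGc.comp_continuous (huc.abs.div_const d) fun x => mem_Ici.2 (by positivity)
  have hUs : HasCompactSupport fun x => G (|u x| / d) :=
    hu_supp.comp_left (g := fun s => G (|s| / d)) (by simp [hG0])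
  obtain ⟨hint, heq⟩ := integral_integral_sub_smul μ hH hHs e hdiam.le
  have hpt : ∀ x, G (|u x| / d) ≤ (∫ t in (0 : ℝ)..d, H (x - t • e)) / d := by
    intro x
    by_cases hx : x ∈ Ω
    · have hseg := abs_le_integral_norm_fderiv_segment hu he hdiam.le
        (hu0 _ (sub_diam_smul_notMem hΩ hb he hx))
      have hle : |u x| / d ≤ (∫ t in (0 : ℝ)..d, ‖fderiv ℝ u (x - t • e)‖) / d := by gcongr
      have h0 : 0 ≤ |u x| / d := by positivity
      exact (hGmono h0 (h0.trans hle) hle).trans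
        (map_integral_div_le_integral_div hGc hGconv (by fun_prop) (fun t => norm_nonneg _) hdiam)
    · rw [hu0 x hx, abs_zero, zero_div, hG0]
      exact div_nonneg (intervalIntegral.integral_nonneg hdiam.le
        fun t _ => hG_nonneg _ (norm_nonneg _)) hdiam.le
  rw [setIntegral_eq_integral_of_forall_compl_eq_zero fun x hx => by simp [hu0 x hx, hG0],
    setIntegral_eq_integral_of_forall_compl_eq_zero fun x hx => by simp [hDu0 x hx, hG0]]
  calc ∫ x, G (|u x| / d) ∂μ
      ≤ ∫ x, (∫ t in (0 : ℝ)..d, H (x - t • e)) / d ∂μ :=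
        integral_mono (hU.integrable_of_hasCompactSupport hUs) (hint.div_const d) hpt
    _ = ∫ x, H x ∂μ := by
        rw [integral_div, heq, mul_div_cancel_left₀ _ hdiam.ne']

/-- Poincaré's inequality in Orlicz form: for a bounded open `Ω ⊂ ℝⁿ` with positive
diameter and every `u ∈ C_c^∞(Ω)`,
`∫_Ω G(|u|/diam Ω) ≤ ∫_Ω G(|Du|)`. -/
theorem poincare_inequality_orlicz
    (g₀ g₁ : ℝ) (hg₀ : 1 < g₀) (hg01 : g₀ ≤ g₁)
    (g g' : ℝ → ℝ)
    (hg_pos : ∀ s, 0 < s → 0 < g s)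
    (hg_deriv : ∀ s, 0 < s → HasDerivAt g (g' s) s)
    (hg'_cont : ContinuousOn g' (Set.Ioi 0))
    (hOrlicz : ∀ s, 0 < s → (g₀ - 1) * g s ≤ s * g' s ∧ s * g' s ≤ (g₁ - 1) * g s)
    (G : ℝ → ℝ) (hG : ∀ s, G s = ∫ r in (0:ℝ)..s, g r)
    (n : ℕ) (hn : 2 ≤ n)
    (Ω : Set (EuclideanSpace ℝ (Fin n)))
    (hΩopen : IsOpen Ω) (hΩbdd : Bornology.IsBounded Ω)
    (hdiam : 0 < Metric.diam Ω)
    (u : EuclideanSpace ℝ (Fin n) → ℝ)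
    (hu : ContDiff ℝ (⊤ : ℕ∞) u) (hu_supp : HasCompactSupport u)
    (hsupp : tsupport u ⊆ Ω) :
    (∫ x in Ω, G (|u x| / Metric.diam Ω)) ≤ ∫ x in Ω, G ‖fderiv ℝ u x‖ := by
  have hg_cont : ContinuousOn g (Ioi 0) := fun s hs =>
    (hg_deriv s hs).continuousAt.continuousWithinAt
  have hg_mono : MonotoneOn g (Ioi 0) := by
    refine monotoneOn_of_deriv_nonneg (convex_Ioi 0) hg_cont ?_ ?_
    · rw [interior_Ioi]
      exact fun s hs => (hg_deriv s hs).differentiableAt.differentiableWithinAt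
    · rw [interior_Ioi]
      intro s hs
      rw [(hg_deriv s hs).deriv]
      have hprod : 0 ≤ s * g' s :=
        (mul_nonneg (sub_nonneg.2 hg₀.le) (hg_pos s hs).le).trans (hOrlicz s hs).1
      exact nonneg_of_mul_nonneg_right hprod hs
  obtain ⟨hGc, hGconv, hGmono⟩ :=
    primitive_continuousOn_convexOn_monotoneOn hg_pos hg_cont hg_mono hG
  have : Nonempty (Fin n) := ⟨⟨0, by omega⟩⟩
  exact poincare_inequality_of_convexOn volume hGc hGconv hGmono (by simp [hG])
    hΩopen hΩbdd hdiam (hu.of_le (by exact_mod_cast le_top)) hu_supp hsupp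
end

section
/- (Parabolic Sobolev inequality) Let 1 ≤ q < min{n, g₀} and q* = nq/(n − q). Then there exists a constant c > 0, depending only on n, g₁ and q, such that the following holds: for every R > 0, every bounded open interval Γ ⊂ ℝ, and every smooth function u : ℝⁿ × ℝ → ℝ such that u(·,t) is compactly supported in the ball B_R ⊂ ℝⁿ for every t ∈ Γ, one has ⨍_{B_R×Γ} G(|u|/R)^{1/q}·|u|^{2(1−1/q*)} dx dt ≤ c·(ess sup_{t∈Γ} ⨍_{B_R} |u(x,t)|² dx)^{1−1/q*}·(⨍_{B_R×Γ} G(|Du|) dx dt)^{1/q}, where Du denotes the spatial gradient of u and ⨍ denotes the integral average. -/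
open Real MeasureTheory Set Filter

/-- `G` is an `N`-function with density `g` whose growth indices lie between `g₀` and `g₁`. -/
structure IsOrliczPair (g₀ g₁ : ℝ) (g G : ℝ → ℝ) : Prop where
  one_lt : 1 < g₀
  le : g₀ ≤ g₁
  zero : G 0 = 0
  pos : ∀ s, 0 < s → 0 < G s
  hasDerivAt : ∀ s, 0 < s → HasDerivAt G (g s) s
  continuous_comp_abs : Continuous fun s => G |s|
  continuousOn : ContinuousOn g (Ioi 0)
  lower : ∀ s, 0 < s → g₀ * G s ≤ s * g s
  upper : ∀ s, 0 < s → s * g s ≤ g₁ * G s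

lemma MonotoneOn.nonneg_of_neg_le {f k : ℝ → ℝ} (hf : MonotoneOn f (Ioi 0))
    (hk : Tendsto k (nhdsWithin 0 (Ioi 0)) (nhds 0)) {s : ℝ} (hs : 0 < s)
    (h : ∀ e, 0 < e → e ≤ s → -k e ≤ f e) : 0 ≤ f s := by
  have hk' : Tendsto (fun e => -k e) (nhdsWithin 0 (Ioi 0)) (nhds 0) := by simpa using hk.neg
  refine le_of_tendsto hk' ?_
  filter_upwards [Ioc_mem_nhdsGT hs] with e he
  exact (h e he.1 he.2).trans (hf he.1 hs he.2)

lemma monotoneOn_Ioi_of_hasDerivAt_nonneg_s16 {f f' : ℝ → ℝ}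
    (hf : ∀ s, 0 < s → HasDerivAt f (f' s) s) (h : ∀ s, 0 < s → 0 ≤ f' s) :
    MonotoneOn f (Ioi 0) := by
  refine monotoneOn_of_deriv_nonneg (convex_Ioi 0)
    (fun s hs => (hf s hs).continuousAt.continuousWithinAt) ?_ ?_
  · rw [interior_Ioi]
    exact fun s hs => (hf s hs).differentiableAt.differentiableWithinAt
  · rw [interior_Ioi]
    intro s hs
    rw [(hf s hs).deriv]
    exact h s hs

lemma isOrliczPair_of_growth {g₀ g₁ : ℝ} (h1 : 1 < g₀) (h2 : g₀ ≤ g₁) {g g' G : ℝ → ℝ}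
    (hg : ∀ s, 0 < s → 0 < g s) (hg' : ∀ s, 0 < s → HasDerivAt g (g' s) s)
    (hgr : ∀ s, 0 < s → (g₀ - 1) * g s ≤ s * g' s ∧ s * g' s ≤ (g₁ - 1) * g s)
    (hG : ∀ s, G s = ∫ r in (0:ℝ)..s, g r) : IsOrliczPair g₀ g₁ g G := by
  have hg'0 : ∀ s, 0 < s → 0 ≤ g' s := by
    intro s hs
    have h := (hgr s hs).1
    have h3 : 0 ≤ (g₀ - 1) * g s := mul_nonneg (by linarith) (hg s hs).le
    exact nonneg_of_mul_nonneg_right (h3.trans h) hs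
  have hmono : MonotoneOn g (Ioi 0) := monotoneOn_Ioi_of_hasDerivAt_nonneg_s16 hg' hg'0
  set γ : ℝ → ℝ := fun r => if 0 < r then g r else 0 with hγ
  have hγm : Monotone γ := by
    intro a b hab
    simp only [hγ]
    split_ifs with ha hb hb
    · exact hmono ha hb hab
    · exact absurd (ha.trans_le hab) hb
    · exact (hg b hb).le
    · exact le_rfl
  have hγi : ∀ a b, IntervalIntegrable γ volume a b := fun a b => hγm.intervalIntegrable
  have hGγ : ∀ s, 0 ≤ s → G s = ∫ r in (0:ℝ)..s, γ r := by
    intro s hs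
    rw [hG]
    refine intervalIntegral.integral_congr_ae (Eventually.of_forall fun r hr => ?_)
    rw [uIoc_of_le hs] at hr
    simp [hγ, hr.1]
  have hcontg : ContinuousOn g (Ioi 0) := fun s hs => (hg' s hs).continuousAt.continuousWithinAt
  have hder : ∀ s, 0 < s → HasDerivAt G (g s) s := by
    intro s hs
    have hγs : γ =ᶠ[nhds s] g := by
      filter_upwards [Ioi_mem_nhds hs] with r hr
      simp [hγ, mem_Ioi.1 hr]
    have hc : ContinuousAt γ s := (hg' s hs).continuousAt.congr hγs.symm
    have h := intervalIntegral.integral_hasDerivAt_right (hγi 0 s)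
      hγm.measurable.stronglyMeasurable.stronglyMeasurableAtFilter hc
    rw [hγs.eq_of_nhds] at h
    refine h.congr_of_eventuallyEq ?_
    filter_upwards [Ioi_mem_nhds hs] with r hr
    exact hGγ r (mem_Ioi.1 hr).le
  have hcont : Continuous fun s => G |s| := by
    have h := (intervalIntegral.continuous_primitive hγi 0).comp continuous_abs
    refine h.congr fun s => ?_
    simp [hGγ |s| (abs_nonneg s)]
  have hzero : G 0 = 0 := by simp [hG]
  have hpos : ∀ s, 0 < s → 0 < G s := by
    intro s hs
    rw [hGγ s hs.le]
    refine intervalIntegral.intervalIntegral_pos_of_pos_on (hγi 0 s) (fun r hr => ?_) hs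
    simp [hγ, hr.1, hg r hr.1]
  have hlim : Tendsto G (nhdsWithin 0 (Ioi 0)) (nhds 0) := by
    have h : Tendsto (fun s => G |s|) (nhdsWithin 0 (Ioi 0)) (nhds 0) := by
      have := hcont.tendsto 0
      simp only [abs_zero, hzero] at this
      exact this.mono_left nhdsWithin_le_nhds
    refine h.congr' ?_
    filter_upwards [self_mem_nhdsWithin] with s hs
    rw [abs_of_pos hs]
  refine ⟨h1, h2, hzero, hpos, hder, hcont, hcontg, ?_, ?_⟩
  · intro s hs
    have hm : MonotoneOn (fun s => s * g s - g₀ * G s) (Ioi 0) := by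
      refine monotoneOn_Ioi_of_hasDerivAt_nonneg_s16
        (fun s hs => ((hasDerivAt_id s).mul (hg' s hs)).sub ((hder s hs).const_mul g₀)) ?_
      intro s hs
      have := (hgr s hs).1
      simp only [id]
      linarith
    have hk : Tendsto (fun e => g₀ * G e) (nhdsWithin 0 (Ioi 0)) (nhds 0) := by
      simpa using hlim.const_mul g₀
    have := hm.nonneg_of_neg_le hk hs (fun e he _ => by
      have := mul_pos he (hg e he)
      linarith)
    linarith
  · intro s hs
    have hm : MonotoneOn (fun s => g₁ * G s - s * g s) (Ioi 0) := by
      refine monotoneOn_Ioi_of_hasDerivAt_nonneg_s16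
        (fun s hs => ((hder s hs).const_mul g₁).sub ((hasDerivAt_id s).mul (hg' s hs))) ?_
      intro s hs
      have := (hgr s hs).2
      simp only [id]
      linarith
    have hk : Tendsto (fun e => e * g s) (nhdsWithin 0 (Ioi 0)) (nhds 0) := by
      have : Tendsto (fun e : ℝ => e * g s) (nhds 0) (nhds (0 * g s)) :=
        tendsto_id.mul_const _
      rw [zero_mul] at this
      exact this.mono_left nhdsWithin_le_nhds
    have := hm.nonneg_of_neg_le hk hs (fun e he hes => by
      have h3 := mul_le_mul_of_nonneg_left (hmono he hs hes) he.le
      have h4 : 0 ≤ g₁ * G e := mul_nonneg (by linarith) (hpos e he).le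
      linarith)
    linarith

namespace IsOrliczPair

variable {g₀ g₁ : ℝ} {g G : ℝ → ℝ}

lemma nonneg (h : IsOrliczPair g₀ g₁ g G) {s : ℝ} (hs : 0 ≤ s) : 0 ≤ G s := by
  rcases hs.eq_or_lt with rfl | hs
  · exact h.zero.ge
  · exact (h.pos s hs).le

lemma mul_rpow_le (h : IsOrliczPair g₀ g₁ g G) {p a b : ℝ} (hp : p ≤ g₀) (ha : 0 < a)
    (hab : a ≤ b) : G a * b ^ p ≤ G b * a ^ p := by
  have hb := ha.trans_le hab
  have hm : MonotoneOn (fun s => G s * s ^ (-p)) (Ioi 0) := by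
    refine monotoneOn_Ioi_of_hasDerivAt_nonneg_s16 (fun s hs => (h.hasDerivAt s hs).mul
      (hasDerivAt_rpow_const (p := -p) (Or.inl hs.ne'))) ?_
    intro s hs
    have h1 : s ^ (-p) = s ^ (-p - 1) * s := by
      rw [← rpow_add_one hs.ne']; congr 1; ring
    rw [h1]
    have h2 := h.lower s hs
    have h3 := mul_le_mul_of_nonneg_right hp (h.pos s hs).le
    have h4 : 0 ≤ s ^ (-p - 1) * (s * g s - p * G s) :=
      mul_nonneg (rpow_nonneg hs.le _) (by linarith)
    linarith
  have := hm ha hb hab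
  simp only [rpow_neg ha.le, rpow_neg hb.le, ← div_eq_mul_inv] at this
  rwa [div_le_div_iff₀ (rpow_pos_of_pos ha p) (rpow_pos_of_pos hb p)] at this

lemma le_mul_rpow (h : IsOrliczPair g₀ g₁ g G) {a b : ℝ} (ha : 0 < a)
    (hab : a ≤ b) : G b * a ^ g₁ ≤ G a * b ^ g₁ := by
  have hb := ha.trans_le hab
  have hm : MonotoneOn (fun s => -(G s * s ^ (-g₁))) (Ioi 0) := by
    refine monotoneOn_Ioi_of_hasDerivAt_nonneg_s16 (fun s hs => ((h.hasDerivAt s hs).mul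
      (hasDerivAt_rpow_const (p := -g₁) (Or.inl hs.ne'))).neg) ?_
    intro s hs
    have h1 : s ^ (-g₁) = s ^ (-g₁ - 1) * s := by
      rw [← rpow_add_one hs.ne']; congr 1; ring
    rw [h1]
    have h2 := h.upper s hs
    have h4 : 0 ≤ s ^ (-g₁ - 1) * (g₁ * G s - s * g s) :=
      mul_nonneg (rpow_nonneg hs.le _) (by linarith)
    linarith
  have := neg_le_neg_iff.1 (hm ha hb hab)
  simp only [rpow_neg ha.le, rpow_neg hb.le, ← div_eq_mul_inv] at this
  rwa [div_le_div_iff₀ (rpow_pos_of_pos hb _) (rpow_pos_of_pos ha _)] at this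

/-- A Young-type inequality: `G(σ) (ξ/σ)^p` splits into a small multiple of `G(σ)` and a
multiple of `G(ξ)`. -/
lemma young (h : IsOrliczPair g₀ g₁ g G) {p ε σ ξ : ℝ} (hp : 1 ≤ p) (hpg : p ≤ g₀)
    (hε : 0 < ε) (hε1 : ε ≤ 1) (hσ : 0 < σ) (hξ : 0 ≤ ξ) :
    G σ * (ξ / σ) ^ p ≤ ε ^ p * G σ + ε ^ (p - g₁) * G ξ := by
  have hp0 : 0 ≤ p := by linarith
  rcases le_or_gt ξ (ε * σ) with hle | hlt
  · have h1 : (ξ / σ) ^ p ≤ ε ^ p :=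
      rpow_le_rpow (by positivity) ((div_le_iff₀ hσ).2 hle) hp0
    have h2 := mul_le_mul_of_nonneg_left h1 (h.pos σ hσ).le
    have h3 : 0 ≤ ε ^ (p - g₁) * G ξ := mul_nonneg (by positivity) (h.nonneg hξ)
    linarith
  · have hξ0 : 0 < ξ := (mul_pos hε hσ).trans hlt
    have h1 : σ ≤ ξ / ε := by rw [le_div_iff₀ hε]; linarith
    have h2 := h.mul_rpow_le hpg hσ h1
    have h3 := h.le_mul_rpow hξ0 (b := ξ / ε) (by
      rw [le_div_iff₀ hε]; nlinarith)
    rw [div_rpow hξ hε.le, mul_div_assoc'] at h2 h3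
    rw [le_div_iff₀ (by positivity)] at h3
    rw [div_le_iff₀ (by positivity)] at h2
    have h4 : G (ξ / ε) * ε ^ g₁ ≤ G ξ := by
      have : 0 < ξ ^ g₁ := by positivity
      nlinarith
    have h5 : G (ξ / ε) ≤ G ξ / ε ^ g₁ := (le_div_iff₀ (by positivity)).2 h4
    have h6 : G σ * (ξ / σ) ^ p ≤ ε ^ p * G (ξ / ε) := by
      rw [div_rpow hξ hσ.le, mul_div_assoc', div_le_iff₀ (by positivity)]
      linarith
    have h7 := mul_le_mul_of_nonneg_left h5 (show 0 ≤ ε ^ p by positivity)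
    have h8 : ε ^ p * (G ξ / ε ^ g₁) = ε ^ (p - g₁) * G ξ := by
      rw [rpow_sub hε]; ring
    have h9 : 0 ≤ ε ^ p * G σ := mul_nonneg (by positivity) (h.pos σ hσ).le
    linarith

/-- The even function `s ↦ G(|s|)^{1/p}` is `C¹` for `1 ≤ p < g₀`. -/
lemma exists_deriv_rpow (h : IsOrliczPair g₀ g₁ g G) {p : ℝ} (hp : 1 ≤ p) (hpg : p < g₀) :
    ∃ k : ℝ → ℝ, Continuous k ∧ (∀ s, HasDerivAt (fun s => G |s| ^ (1 / p)) (k s) s) ∧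
      k 0 = 0 ∧ ∀ s, |k s| * |s| ≤ g₁ / p * G |s| ^ (1 / p) := by
  have hp0 : 0 < p := by linarith
  have hg₁ : 0 < g₁ := by linarith [h.one_lt, h.le]
  have hgnn : ∀ s, 0 < s → 0 ≤ g s := fun s hs => by
    have := h.lower s hs
    have h2 : 0 ≤ g₀ * G s := mul_nonneg (by linarith) (h.pos s hs).le
    exact nonneg_of_mul_nonneg_right (h2.trans this) hs
  set k : ℝ → ℝ := fun s => (g |s| * (1 / p) * G |s| ^ (1 / p - 1)) * SignType.sign s with hk
  have hk0 : k 0 = 0 := by simp [hk]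
  have hderiv : ∀ s, s ≠ 0 → HasDerivAt (fun s => G |s| ^ (1 / p)) (k s) s := by
    intro s hs
    have hs' := abs_pos.2 hs
    exact ((h.hasDerivAt _ hs').rpow_const (Or.inl (h.pos _ hs').ne')).comp s (hasDerivAt_abs hs)
  have hbound : ∀ s, |k s| * |s| ≤ g₁ / p * G |s| ^ (1 / p) := by
    intro s
    rcases eq_or_ne s 0 with rfl | hs
    · simp only [abs_zero, mul_zero, h.zero]
      positivity
    have hs' := abs_pos.2 hs
    have hG := h.pos _ hs'
    have h1 : |k s| = g |s| * (1 / p) * G |s| ^ (1 / p - 1) := by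
      have : |((SignType.sign s : SignType) : ℝ)| = 1 := by
        rcases hs.lt_or_gt with h' | h'
        · simp [sign_neg h']
        · simp [sign_pos h']
      simp only [hk]
      rw [abs_mul, this, mul_one, abs_of_nonneg]
      exact mul_nonneg (mul_nonneg (hgnn _ hs') (by positivity)) (by positivity)
    rw [h1, show G |s| ^ (1 / p) = G |s| ^ (1 / p - 1) * G |s| by
      rw [← rpow_add_one hG.ne']; congr 1; ring]
    have h2 := mul_le_mul_of_nonneg_left (h.upper _ hs')
      (show 0 ≤ 1 / p * G |s| ^ (1 / p - 1) by positivity)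
    calc _ = 1 / p * G |s| ^ (1 / p - 1) * (|s| * g |s|) := by ring
      _ ≤ _ := h2
      _ = _ := by ring
  have hkc0 : ContinuousAt k 0 := by
    have hlim : Tendsto (fun s : ℝ => g₁ / p * G 1 ^ (1 / p) * |s| ^ (g₀ / p - 1)) (nhds 0)
        (nhds 0) := by
      have he : 0 < g₀ / p - 1 := by
        rw [sub_pos, lt_div_iff₀ hp0]; linarith
      have hc : Continuous fun s : ℝ => g₁ / p * G 1 ^ (1 / p) * |s| ^ (g₀ / p - 1) :=
        continuous_const.mul (continuous_abs.rpow_const fun _ => Or.inr he.le)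
      have := hc.tendsto 0
      simpa [zero_rpow he.ne'] using this
    rw [ContinuousAt, hk0]
    refine squeeze_zero_norm' ?_ hlim
    filter_upwards [Metric.ball_mem_nhds (0 : ℝ) one_pos] with s hs1
    rcases eq_or_ne s 0 with rfl | hs
    · rw [hk0, norm_zero]
      have := h.pos 1 one_pos
      positivity
    have hs' := abs_pos.2 hs
    have hs1' : |s| ≤ 1 := by simpa using (mem_ball_zero_iff.1 hs1).le
    have h1 := h.mul_rpow_le le_rfl hs' hs1'
    rw [one_rpow, mul_one] at h1
    have h2 : G |s| ^ (1 / p) ≤ G 1 ^ (1 / p) * |s| ^ (g₀ / p) := by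
      have h3 := rpow_le_rpow (h.pos _ hs').le h1 (show 0 ≤ 1 / p by positivity)
      rwa [mul_rpow (h.pos 1 one_pos).le (by positivity), ← rpow_mul hs'.le,
        mul_one_div] at h3
    have h4 := (hbound s).trans (mul_le_mul_of_nonneg_left h2 (show 0 ≤ g₁ / p by positivity))
    rw [← le_div_iff₀ hs'] at h4
    refine h4.trans_eq ?_
    rw [rpow_sub_one hs'.ne']
    ring
  have hkc : Continuous k := by
    rw [continuous_iff_continuousAt]
    intro s
    rcases eq_or_ne s 0 with rfl | hs
    · exact hkc0
    have hs' := abs_pos.2 hs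
    have c1 : ContinuousAt (fun s => g |s|) s :=
      (ContinuousAt.comp (f := fun s : ℝ => |s|) (h.continuousOn.continuousAt (Ioi_mem_nhds hs'))
        continuous_abs.continuousAt)
    have c2 : ContinuousAt (fun s => G |s| ^ (1 / p - 1)) s :=
      h.continuous_comp_abs.continuousAt.rpow_const (Or.inl (h.pos _ hs').ne')
    have c3 : ContinuousAt (fun s : ℝ => ((SignType.sign s : SignType) : ℝ)) s :=
      ContinuousAt.comp (g := fun t : SignType => (t : ℝ)) continuous_of_discreteTopology.continuousAt
        (continuousAt_sign_of_ne_zero hs)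
    exact ((c1.mul continuousAt_const).mul c2).mul c3
  refine ⟨k, hkc, hasDerivAt_of_hasDerivAt_of_ne' hderiv ?_ hkc0, hk0, hbound⟩
  exact h.continuous_comp_abs.continuousAt.rpow_const (Or.inr (by positivity))

lemma deriv_mul_rpow_le (h : IsOrliczPair g₀ g₁ g G) {p ε : ℝ} (hp : 1 ≤ p) (hpg : p ≤ g₀)
    (hε : 0 < ε) (hε1 : ε ≤ 1) {k : ℝ → ℝ} (hk0 : k 0 = 0)
    (hk : ∀ s, |k s| * |s| ≤ g₁ / p * G |s| ^ (1 / p)) (σ : ℝ) {ξ : ℝ} (hξ : 0 ≤ ξ) :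
    (|k σ| * ξ) ^ p ≤ (g₁ / p) ^ p * (ε ^ p * G |σ| + ε ^ (p - g₁) * G ξ) := by
  have hp0 : 0 < p := by linarith
  have hg₁ : 0 < g₁ := by linarith [h.one_lt, h.le]
  rcases eq_or_ne σ 0 with rfl | hs
  · have := h.nonneg hξ
    simp only [hk0, abs_zero, zero_mul, zero_rpow hp0.ne', h.zero]
    positivity
  have hs' := abs_pos.2 hs
  have h1 := hk σ
  rw [← le_div_iff₀ hs'] at h1
  have h2 : |k σ| * ξ ≤ g₁ / p * G |σ| ^ (1 / p) * (ξ / |σ|) :=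
    (mul_le_mul_of_nonneg_right h1 hξ).trans_eq (by ring)
  have hG := (h.pos _ hs').le
  calc (|k σ| * ξ) ^ p ≤ (g₁ / p * G |σ| ^ (1 / p) * (ξ / |σ|)) ^ p :=
        rpow_le_rpow (by positivity) h2 hp0.le
    _ = (g₁ / p) ^ p * (G |σ| * (ξ / |σ|) ^ p) := by
        rw [mul_rpow (by positivity) (by positivity), mul_rpow (by positivity) (by positivity),
          ← rpow_mul hG, one_div_mul_cancel hp0.ne', rpow_one, mul_assoc]
    _ ≤ _ := mul_le_mul_of_nonneg_left (h.young hp hpg hε hε1 hs' hξ) (by positivity)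

end IsOrliczPair

section Spatial

variable {E : Type*} [NormedAddCommGroup E] [InnerProductSpace ℝ E] {g₀ g₁ : ℝ} {g G : ℝ → ℝ}

lemma hasFDerivAt_comp_abs_div_rpow {p R : ℝ} {v : E → ℝ} (hv : ContDiff ℝ 1 v) {k : ℝ → ℝ}
    (hk : ∀ s, HasDerivAt (fun s => G |s| ^ (1 / p)) (k s) s) (x : E) :
    HasFDerivAt (fun x => G (|v x / R|) ^ (1 / p)) ((k (v x / R) / R) • fderiv ℝ v x) x := by
  have h1 : HasFDerivAt (fun x => v x / R) (R⁻¹ • fderiv ℝ v x) x := by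
    simp only [div_eq_mul_inv]
    exact ((hv.differentiable one_ne_zero) x).hasFDerivAt.mul_const R⁻¹
  have h2 := (hk (v x / R)).comp_hasFDerivAt x h1
  rw [smul_smul, ← div_eq_mul_inv] at h2
  exact h2

lemma contDiff_comp_abs_div_rpow {p R : ℝ} {v : E → ℝ} (hv : ContDiff ℝ 1 v) {k : ℝ → ℝ}
    (hkc : Continuous k)
    (hk : ∀ s, HasDerivAt (fun s => G |s| ^ (1 / p)) (k s) s) :
    ContDiff ℝ 1 (fun x => G (|v x / R|) ^ (1 / p)) := by
  have h1 : ContDiff ℝ 1 (fun s => G |s| ^ (1 / p)) := by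
    rw [contDiff_one_iff_deriv]
    refine ⟨fun s => (hk s).differentiableAt, ?_⟩
    rwa [show deriv (fun s => G |s| ^ (1 / p)) = k from funext fun s => (hk s).deriv]
  exact h1.comp (hv.div_const R)

lemma IsOrliczPair.hasCompactSupport_comp (h : IsOrliczPair g₀ g₁ g G) {p R : ℝ} (hp : 1 ≤ p)
    {X : Type*} [TopologicalSpace X] {v : X → ℝ} (hv : HasCompactSupport v) :
    HasCompactSupport (fun x => G (|v x / R|) ^ (1 / p)) := by
  have hp' : 1 / p ≠ 0 := by positivity
  exact hv.comp_left (g := fun y => G (|y / R|) ^ (1 / p)) (by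
    simp only [zero_div, abs_zero, h.zero, zero_rpow hp'])

variable [FiniteDimensional ℝ E] [MeasurableSpace E] [BorelSpace E]

lemma IsOrliczPair.integrable_norm_fderiv (h : IsOrliczPair g₀ g₁ g G) {v : E → ℝ}
    (hv : ContDiff ℝ 1 v) (hs : HasCompactSupport v) :
    Integrable (fun x => G ‖fderiv ℝ v x‖) := by
  have hc : Continuous fun x => G ‖fderiv ℝ v x‖ := by
    have := h.continuous_comp_abs.comp (hv.continuous_fderiv one_ne_zero).norm
    refine this.congr fun x => ?_
    simp
  refine hc.integrable_of_hasCompactSupport ?_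
  exact (hs.fderiv ℝ).comp_left (g := fun L => G ‖L‖) (by simp [h.zero])

/-- Modular Poincaré inequality for compactly supported functions in a ball. -/
lemma IsOrliczPair.poincare (h : IsOrliczPair g₀ g₁ g G) {e : E} (he : ‖e‖ = 1)
    {x₀ : E} {R : ℝ} (hR : 0 < R) {v : E → ℝ} (hv : ContDiff ℝ 1 v) (hs : HasCompactSupport v)
    (hsB : tsupport v ⊆ Metric.ball x₀ R) :
    ∫ x, G |v x / R| ≤ 2 * g₁ * (1 / (2 * g₁)) ^ (1 - g₁) * ∫ x, G ‖fderiv ℝ v x‖ := by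
  have hg1 : 1 < g₁ := h.one_lt.trans_le h.le
  obtain ⟨k, hkc, hk, hk0, hkb⟩ := h.exists_deriv_rpow le_rfl h.one_lt
  have hw1 := contDiff_comp_abs_div_rpow (R := R) hv hkc hk
  have hwd := hasFDerivAt_comp_abs_div_rpow (R := R) hv hk
  have hwc := h.hasCompactSupport_comp (R := R) le_rfl hs
  have hyoung := fun x => h.deriv_mul_rpow_le (ε := 1 / (2 * g₁)) le_rfl h.one_lt.le (by positivity)
    (by rw [div_le_one (by positivity)]; linarith) hk0 hkb (v x / R) (norm_nonneg (fderiv ℝ v x))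
  simp only [rpow_one, div_one] at hw1 hwd hwc hyoung
  set w : E → ℝ := fun x => G (|v x / R|) with hw
  set f : E → ℝ := fun x => inner ℝ e (x - x₀) with hf
  have hfd : ∀ x, HasFDerivAt f (innerSL ℝ e) x := fun x => by
    have := ((innerSL ℝ e).hasFDerivAt (x := x)).sub_const (innerSL ℝ e x₀)
    refine this.congr_of_eventuallyEq (Eventually.of_forall fun y => ?_)
    simp [hf, inner_sub_right]
  have hf1 : ∀ x, fderiv ℝ f x e = 1 := fun x => by
    rw [(hfd x).fderiv]; simp [he]
  have hfc : Continuous f := by fun_prop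
  have hwi : Integrable w := hw1.continuous.integrable_of_hasCompactSupport hwc
  have hw'c : Continuous fun x => fderiv ℝ w x e :=
    (hw1.continuous_fderiv one_ne_zero).clm_apply continuous_const
  have hw's : HasCompactSupport fun x => fderiv ℝ w x e :=
    (hwc.fderiv ℝ).comp_left (g := fun L : E →L[ℝ] ℝ => L e) (by simp)
  have hparts := integral_mul_fderiv_eq_neg_fderiv_mul_of_integrable (μ := (volume : Measure E))
    (f := w) (g := f) (v := e)
    ((hw'c.mul hfc).integrable_of_hasCompactSupport hw's.mul_right)
    (by simpa only [hf1, mul_one] using hwi)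
    ((hw1.continuous.mul hfc).integrable_of_hasCompactSupport hwc.mul_right)
    (fun x _ => (hw1.differentiable one_ne_zero) x) (fun x _ => (hfd x).differentiableAt)
  simp only [hf1, mul_one] at hparts
  have hGi := h.integrable_norm_fderiv hv hs
  have hpt : ∀ x, -(fderiv ℝ w x e * f x) ≤
      1 / 2 * w x + g₁ * (1 / (2 * g₁)) ^ (1 - g₁) * G ‖fderiv ℝ v x‖ := by
    intro x
    have h0 : |k (v x / R)| * ‖fderiv ℝ v x‖ ≤
        1 / 2 * w x + g₁ * (1 / (2 * g₁)) ^ (1 - g₁) * G ‖fderiv ℝ v x‖ := by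
      refine (hyoung x).trans_eq ?_
      rw [mul_add]
      congr 1
      · simp only [hw]
        field_simp
      · ring
    refine le_trans ?_ h0
    by_cases hx : x ∈ tsupport v
    · have hfR : |f x| ≤ R := by
        have h1 := abs_real_inner_le_norm e (x - x₀)
        rw [he, one_mul, ← dist_eq_norm] at h1
        exact h1.trans (Metric.mem_ball.1 (hsB hx)).le
      have h2 : |fderiv ℝ w x e| ≤ |k (v x / R)| * ‖fderiv ℝ v x‖ / R := by
        rw [(hwd x).fderiv]
        have := (fderiv ℝ v x).le_opNorm e
        rw [he, mul_one, Real.norm_eq_abs] at this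
        simp only [smul_apply, smul_eq_mul, abs_mul, abs_div, abs_of_pos hR]
        calc _ ≤ |k (v x / R)| / R * ‖fderiv ℝ v x‖ := by gcongr
          _ = _ := by ring
      calc -(fderiv ℝ w x e * f x) ≤ |fderiv ℝ w x e * f x| := neg_le_abs _
        _ = |fderiv ℝ w x e| * |f x| := abs_mul _ _
        _ ≤ |k (v x / R)| * ‖fderiv ℝ v x‖ / R * R := by gcongr
        _ = _ := by field_simp
    · have hz : fderiv ℝ v x = 0 :=
        image_eq_zero_of_notMem_tsupport fun hx' => hx (tsupport_fderiv_subset ℝ hx')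
      rw [(hwd x).fderiv, hz]
      simp
  have hle : -∫ x, fderiv ℝ w x e * f x ≤
      1 / 2 * (∫ x, w x) + g₁ * (1 / (2 * g₁)) ^ (1 - g₁) * ∫ x, G ‖fderiv ℝ v x‖ := by
    rw [← integral_neg, ← integral_const_mul, ← integral_const_mul,
      ← integral_add (hwi.const_mul _) (hGi.const_mul _)]
    exact integral_mono
      ((hw'c.mul hfc).integrable_of_hasCompactSupport hw's.mul_right).neg
      ((hwi.const_mul _).add (hGi.const_mul _)) hpt
  rw [← hparts] at hle
  have : ∫ x, w x = ∫ x, G |v x / R| := rfl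
  linarith

/-- The Gagliardo–Nirenberg–Sobolev inequality in terms of Bochner integrals. -/
lemma rpow_integral_rpow_le_sobolev {q r : ℝ} (hq : 1 ≤ q) (hr : 1 ≤ r)
    (hn : 0 < Module.finrank ℝ E) (hqr : r⁻¹ = q⁻¹ - (Module.finrank ℝ E : ℝ)⁻¹)
    {w : E → ℝ} (hw : ContDiff ℝ 1 w) (hs : HasCompactSupport w) :
    (∫ x, |w x| ^ r) ^ (1 / r) ≤
      SNormLESNormFDerivOfEqConst ℝ (volume : Measure E) q *
        (∫ x, ‖fderiv ℝ w x‖ ^ q) ^ (1 / q) := by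
  have hq0 : 0 < q := by linarith
  have hr0 : 0 < r := by linarith
  have hS := eLpNorm_le_eLpNorm_fderiv_of_eq (volume : Measure E) hw hs (p := q.toNNReal)
    (p' := r.toNNReal) (by simpa using hq) hn
    (by rw [Real.coe_toNNReal _ hr0.le, NNReal.coe_inv, Real.coe_toNNReal _ hq0.le]; exact hqr)
  have m1 : MemLp w (r.toNNReal : ENNReal) := hw.continuous.memLp_of_hasCompactSupport hs
  have m2 : MemLp (fderiv ℝ w) (q.toNNReal : ENNReal) :=
    (hw.continuous_fderiv one_ne_zero).memLp_of_hasCompactSupport (hs.fderiv ℝ)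
  rw [m1.eLpNorm_eq_integral_rpow_norm (by simpa using hr0) ENNReal.coe_ne_top,
    m2.eLpNorm_eq_integral_rpow_norm (by simpa using hq0) ENNReal.coe_ne_top] at hS
  simp only [ENNReal.coe_toReal, Real.coe_toNNReal _ hr0.le, Real.coe_toNNReal _ hq0.le,
    Real.norm_eq_abs] at hS
  rw [← ENNReal.ofReal_coe_nnreal, ← ENNReal.ofReal_mul (NNReal.coe_nonneg _),
    ENNReal.ofReal_le_ofReal_iff (by positivity)] at hS
  simpa only [one_div] using hS

/-- A constant for the Sobolev inequality of `G(|v|/R)^{1/q}`. -/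
noncomputable def orliczSobolevConst (E : Type*) [NormedAddCommGroup E] [InnerProductSpace ℝ E]
    [FiniteDimensional ℝ E] [MeasurableSpace E] [BorelSpace E] (g₁ q : ℝ) : ℝ :=
  SNormLESNormFDerivOfEqConst ℝ (volume : Measure E) q *
    ((g₁ / q) ^ q * (2 * g₁ * (1 / (2 * g₁)) ^ (1 - g₁) + 1)) ^ (1 / q)

lemma IsOrliczPair.sobolev (h : IsOrliczPair g₀ g₁ g G) {q r : ℝ} (hq : 1 ≤ q) (hqg : q < g₀)
    (hr : 1 ≤ r) (hn : 0 < Module.finrank ℝ E)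
    (hqr : r⁻¹ = q⁻¹ - (Module.finrank ℝ E : ℝ)⁻¹)
    {x₀ : E} {R : ℝ} (hR : 0 < R) {v : E → ℝ} (hv : ContDiff ℝ 1 v) (hs : HasCompactSupport v)
    (hsB : tsupport v ⊆ Metric.ball x₀ R) :
    (∫ x, (G |v x / R| ^ (1 / q)) ^ r) ^ (1 / r) ≤
      orliczSobolevConst E g₁ q * R⁻¹ * (∫ x, G ‖fderiv ℝ v x‖) ^ (1 / q) := by
  have hq0 : 0 < q := by linarith
  have hg1 : 1 < g₁ := h.one_lt.trans_le h.le
  obtain ⟨k, hkc, hk, hk0, hkb⟩ := h.exists_deriv_rpow hq hqg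
  have hw1 := contDiff_comp_abs_div_rpow (R := R) hv hkc hk
  have hwd := hasFDerivAt_comp_abs_div_rpow (R := R) hv hk
  have hwc := h.hasCompactSupport_comp (R := R) hq hs
  have hyoung := fun x => h.deriv_mul_rpow_le (ε := 1) hq hqg.le one_pos le_rfl hk0 hkb (v x / R)
    (norm_nonneg (fderiv ℝ v x))
  simp only [one_rpow, one_mul] at hyoung
  have : Nontrivial E := Module.finrank_pos_iff.1 hn
  obtain ⟨e, he⟩ := exists_norm_eq E zero_le_one
  have hP := h.poincare he hR hv hs hsB
  have hGi := h.integrable_norm_fderiv hv hs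
  have hGv : Integrable (fun x => G |v x / R|) := by
    have hc : Continuous (fun x => G |v x / R|) :=
      h.continuous_comp_abs.comp (hv.continuous.div_const R)
    exact hc.integrable_of_hasCompactSupport
      (hs.comp_left (g := fun y => G |y / R|) (by simp [h.zero]))
  set D := ∫ x, G ‖fderiv ℝ v x‖ with hD
  have hD0 : 0 ≤ D := integral_nonneg fun x => h.nonneg (norm_nonneg _)
  set P := 2 * g₁ * (1 / (2 * g₁)) ^ (1 - g₁) with hPdef
  have hP0 : 0 ≤ P := by positivity
  have hS := rpow_integral_rpow_le_sobolev hq hr hn hqr hw1 hwc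
  have habs : ∀ x, |G |v x / R| ^ (1 / q)| = G |v x / R| ^ (1 / q) := fun x =>
    abs_of_nonneg (rpow_nonneg (h.nonneg (abs_nonneg _)) _)
  simp only [habs] at hS
  refine hS.trans ?_
  have hgrad : ∫ x, ‖fderiv ℝ (fun x => G |v x / R| ^ (1 / q)) x‖ ^ q ≤
      (R⁻¹) ^ q * ((g₁ / q) ^ q * (P + 1)) * D := by
    have hle : ∀ x, ‖fderiv ℝ (fun x => G |v x / R| ^ (1 / q)) x‖ ^ q ≤
        (R⁻¹) ^ q * (g₁ / q) ^ q * (G |v x / R| + G ‖fderiv ℝ v x‖) := by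
      intro x
      rw [(hwd x).fderiv, norm_smul, Real.norm_eq_abs, abs_div, abs_of_pos hR,
        show |k (v x / R)| / R * ‖fderiv ℝ v x‖ = R⁻¹ * (|k (v x / R)| * ‖fderiv ℝ v x‖) by ring,
        mul_rpow (by positivity) (by positivity), mul_assoc]
      exact mul_le_mul_of_nonneg_left (hyoung x) (by positivity)
    have hint : Integrable fun x =>
        (R⁻¹) ^ q * (g₁ / q) ^ q * (G |v x / R| + G ‖fderiv ℝ v x‖) :=
      (hGv.add hGi).const_mul _
    refine (integral_mono_of_nonneg (Eventually.of_forall fun x => by positivity) hint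
      (Eventually.of_forall hle)).trans ?_
    rw [integral_const_mul, integral_add hGv hGi]
    calc _ ≤ (R⁻¹) ^ q * (g₁ / q) ^ q * (P * D + D) := by gcongr
      _ = _ := by ring
  have hroot := rpow_le_rpow (integral_nonneg fun x => by positivity) hgrad
    (show 0 ≤ 1 / q by positivity)
  rw [mul_rpow (by positivity) hD0, mul_rpow (by positivity) (by positivity),
    ← rpow_mul (by positivity), mul_one_div_cancel hq0.ne', rpow_one] at hroot
  refine (mul_le_mul_of_nonneg_left hroot (NNReal.coe_nonneg _)).trans_eq ?_
  rw [orliczSobolevConst]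
  ring

lemma IsOrliczPair.integral_mul_le (h : IsOrliczPair g₀ g₁ g G) {q r : ℝ} (hq : 1 ≤ q)
    (hqg : q < g₀) (hr : 1 < r) (hn : 0 < Module.finrank ℝ E)
    (hqr : r⁻¹ = q⁻¹ - (Module.finrank ℝ E : ℝ)⁻¹)
    {x₀ : E} {R : ℝ} (hR : 0 < R) {v : E → ℝ} (hv : ContDiff ℝ 1 v) (hs : HasCompactSupport v)
    (hsB : tsupport v ⊆ Metric.ball x₀ R) :
    ∫ x, G (|v x| / R) ^ (1 / q) * |v x| ^ (2 * (1 - 1 / r)) ≤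
      orliczSobolevConst E g₁ q * R⁻¹ * (∫ x, v x ^ 2) ^ (1 - 1 / r) *
        (∫ x, G ‖fderiv ℝ v x‖) ^ (1 / q) := by
  have ha : 0 < 1 - 1 / r := by
    rw [sub_pos, div_lt_one (by linarith)]; exact hr
  have hconj : r.HolderConjugate (1 - 1 / r)⁻¹ := by
    rw [Real.holderConjugate_iff]
    exact ⟨hr, by rw [inv_inv]; ring⟩
  obtain ⟨k, hkc, hk, -, -⟩ := h.exists_deriv_rpow hq hqg
  have hw1 := contDiff_comp_abs_div_rpow (R := R) hv hkc hk
  have hwc := h.hasCompactSupport_comp (R := R) hq hs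
  have hvc : Continuous fun x => |v x| ^ (2 * (1 - 1 / r)) :=
    hv.continuous.abs.rpow_const fun _ => Or.inr (by positivity)
  have hvs : HasCompactSupport fun x => |v x| ^ (2 * (1 - 1 / r)) :=
    hs.comp_left (g := fun y => |y| ^ (2 * (1 - 1 / r))) (by
      rw [abs_zero, zero_rpow (by positivity)])
  have hH := integral_mul_le_Lp_mul_Lq_of_nonneg (μ := (volume : Measure E)) hconj
    (Eventually.of_forall fun x => rpow_nonneg (h.nonneg (abs_nonneg (v x / R))) (1 / q))
    (Eventually.of_forall fun x => rpow_nonneg (abs_nonneg (v x)) (2 * (1 - 1 / r)))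
    (hw1.continuous.memLp_of_hasCompactSupport hwc) (hvc.memLp_of_hasCompactSupport hvs)
  have hpow : ∀ x, (|v x| ^ (2 * (1 - 1 / r))) ^ (1 - 1 / r)⁻¹ = v x ^ 2 := fun x => by
    rw [← rpow_mul (abs_nonneg _), mul_assoc, mul_inv_cancel₀ ha.ne', mul_one, rpow_two, sq_abs]
  rw [one_div (1 - 1 / r)⁻¹, inv_inv] at hH
  simp only [hpow] at hH
  have hS := h.sobolev hq hqg hr.le hn hqr hR hv hs hsB
  have habs : ∀ x, |v x / R| = |v x| / R := fun x => by rw [abs_div, abs_of_pos hR]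
  simp only [habs] at hH hS
  have h2 : 0 ≤ (∫ x, v x ^ 2) ^ (1 - 1 / r) :=
    rpow_nonneg (integral_nonneg fun x => sq_nonneg _) _
  refine (hH.trans (mul_le_mul_of_nonneg_right hS h2)).trans_eq ?_
  ring

end Spatial

section Parabolic

/-- Jensen's inequality for the concave power `s ↦ s ^ (1 / q)`. -/
lemma setAverage_rpow_le {q : ℝ} (hq : 1 ≤ q) {t₁ t₂ : ℝ} (ht : t₁ < t₂) {F : ℝ → ℝ}
    (hF0 : ∀ t, 0 ≤ F t) (hF : IntegrableOn F (Ioo t₁ t₂)) :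
    IntegrableOn (fun t => F t ^ (1 / q)) (Ioo t₁ t₂) ∧
      ⨍ t in Ioo t₁ t₂, F t ^ (1 / q) ≤ (⨍ t in Ioo t₁ t₂, F t) ^ (1 / q) := by
  have hq0 : 0 < q := by linarith
  have hq1 : 1 / q ≤ 1 := by rwa [div_le_one hq0]
  have hvol : volume (Ioo t₁ t₂) ≠ ⊤ := measure_Ioo_lt_top.ne
  have hi : IntegrableOn (fun t => F t ^ (1 / q)) (Ioo t₁ t₂) := by
    refine Integrable.mono' ((integrableOn_const (C := (1 : ℝ)) hvol).add hF)
      (hF.aestronglyMeasurable.aemeasurable.pow_const _).aestronglyMeasurable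
      (Eventually.of_forall fun t => ?_)
    rw [Real.norm_of_nonneg (rpow_nonneg (hF0 t) _)]
    simp only [Pi.add_apply]
    rcases le_total (F t) 1 with h | h
    · have := rpow_le_one (hF0 t) h (show 0 ≤ 1 / q by positivity)
      linarith [hF0 t]
    · have := rpow_le_rpow_of_exponent_le h hq1
      rw [rpow_one] at this
      linarith
  refine ⟨hi, ?_⟩
  exact (concaveOn_rpow (by positivity) hq1).le_map_set_average
    (continuous_id.rpow_const fun _ => Or.inr (by positivity)).continuousOn isClosed_Ici
    (by simpa using ht) hvol (Eventually.of_forall hF0) hF hi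

variable {E : Type*} [NormedAddCommGroup E] [InnerProductSpace ℝ E]

lemma ContDiff.fderiv_slice_fst {u : E × ℝ → ℝ} (hu : ContDiff ℝ 1 u) (z : E × ℝ) :
    fderiv ℝ (fun x => u (x, z.2)) z.1 =
      (fderiv ℝ u z).comp (ContinuousLinearMap.inl ℝ E ℝ) := by
  have h1 : HasFDerivAt (fun x : E => (x, z.2)) (ContinuousLinearMap.inl ℝ E ℝ) z.1 :=
    hasFDerivAt_prodMk_left z.1 z.2
  have h2 : HasFDerivAt u (fderiv ℝ u z) (z.1, z.2) :=
    ((hu.differentiable one_ne_zero) z).hasFDerivAt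
  exact (h2.comp z.1 h1).fderiv

variable [FiniteDimensional ℝ E] [MeasurableSpace E] [BorelSpace E]

lemma Continuous.integrableOn_ball_prod_Ioo {f : E × ℝ → ℝ} (hf : Continuous f) (x₀ : E)
    (R t₁ t₂ : ℝ) :
    IntegrableOn f (Metric.ball x₀ R ×ˢ Ioo t₁ t₂) :=
  (hf.continuousOn.integrableOn_compact
    ((isCompact_closedBall x₀ R).prod isCompact_Icc)).mono_set
    (prod_mono Metric.ball_subset_closedBall Ioo_subset_Icc_self)

lemma Continuous.setAverage_ball_prod_Ioo {f : E × ℝ → ℝ} (hf : Continuous f) (x₀ : E)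
    (R t₁ t₂ : ℝ) :
    ⨍ z in Metric.ball x₀ R ×ˢ Ioo t₁ t₂, f z =
      ⨍ t in Ioo t₁ t₂, ⨍ x in Metric.ball x₀ R, f (x, t) := by
  have hi := hf.integrableOn_ball_prod_Ioo x₀ R t₁ t₂
  simp only [setAverage_eq, smul_eq_mul]
  rw [integral_const_mul, Measure.volume_eq_prod, measureReal_prod_prod, mul_inv]
  rw [IntegrableOn, Measure.volume_eq_prod, ← Measure.prod_restrict] at hi
  rw [← Measure.prod_restrict, integral_prod_symm f hi]
  ring

lemma Continuous.integrableOn_setAverage_ball {f : E × ℝ → ℝ} (hf : Continuous f) (x₀ : E)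
    (R t₁ t₂ : ℝ) :
    IntegrableOn (fun t => ⨍ x in Metric.ball x₀ R, f (x, t)) (Ioo t₁ t₂) := by
  have hi := hf.integrableOn_ball_prod_Ioo x₀ R t₁ t₂
  simp only [setAverage_eq, smul_eq_mul]
  rw [IntegrableOn, Measure.volume_eq_prod, ← Measure.prod_restrict] at hi
  exact hi.integral_prod_right.const_mul _

variable {g₀ g₁ : ℝ} {g G : ℝ → ℝ}

lemma IsOrliczPair.setAverage_mul_le (h : IsOrliczPair g₀ g₁ g G) {q r : ℝ} (hq : 1 ≤ q)
    (hqg : q < g₀) (hr : 1 < r) (hn : 0 < Module.finrank ℝ E)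
    (hqr : r⁻¹ = q⁻¹ - (Module.finrank ℝ E : ℝ)⁻¹)
    {x₀ : E} {R : ℝ} (hR : 0 < R) {v : E → ℝ} (hv : ContDiff ℝ 1 v) (hs : HasCompactSupport v)
    (hsB : tsupport v ⊆ Metric.ball x₀ R) :
    ⨍ x in Metric.ball x₀ R, G (|v x| / R) ^ (1 / q) * |v x| ^ (2 * (1 - 1 / r)) ≤
      orliczSobolevConst E g₁ q *
        volume.real (Metric.ball (0 : E) 1) ^ (Module.finrank ℝ E : ℝ)⁻¹ *
        (⨍ x in Metric.ball x₀ R, v x ^ 2) ^ (1 - 1 / r) *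
        (⨍ x in Metric.ball x₀ R, G ‖fderiv ℝ v x‖) ^ (1 / q) := by
  have hq0 : 0 < q := by linarith
  have ha : 0 < 1 - 1 / r := by
    rw [sub_pos, div_lt_one (by linarith)]; exact hr
  have hmain := h.integral_mul_le hq hqg hr hn hqr hR hv hs hsB
  have hv0 : ∀ x, x ∉ Metric.ball x₀ R → v x = 0 := fun x hx =>
    image_eq_zero_of_notMem_tsupport fun hx' => hx (hsB hx')
  have hd0 : ∀ x, x ∉ Metric.ball x₀ R → fderiv ℝ v x = 0 := fun x hx =>
    image_eq_zero_of_notMem_tsupport fun hx' => hx (hsB (tsupport_fderiv_subset ℝ hx'))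
  simp only [setAverage_eq, smul_eq_mul]
  rw [setIntegral_eq_integral_of_forall_compl_eq_zero (fun x hx => by
      rw [hv0 x hx, abs_zero, zero_rpow (x := 2 * (1 - 1 / r)) (by positivity), mul_zero]),
    setIntegral_eq_integral_of_forall_compl_eq_zero (fun x hx => by
      rw [hv0 x hx, zero_pow two_ne_zero]),
    setIntegral_eq_integral_of_forall_compl_eq_zero (fun x hx => by
      rw [hd0 x hx, norm_zero, h.zero])]
  set I₂ := ∫ x, v x ^ 2
  set I₃ := ∫ x, G ‖fderiv ℝ v x‖
  have hI₂ : 0 ≤ I₂ := integral_nonneg fun x => sq_nonneg _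
  have hI₃ : 0 ≤ I₃ := integral_nonneg fun x => h.nonneg (norm_nonneg _)
  set d := Module.finrank ℝ E with hd
  set ω := volume.real (Metric.ball (0 : E) 1) with hω
  have hω0 : 0 < ω := by
    rw [hω, measureReal_def]
    exact ENNReal.toReal_pos (Metric.measure_ball_pos _ _ one_pos).ne' measure_ball_lt_top.ne
  have hV : volume.real (Metric.ball x₀ R) = R ^ d * ω := by
    rw [measureReal_def, Measure.addHaar_ball_of_pos _ _ hR, ENNReal.toReal_mul,
      ENNReal.toReal_ofReal (by positivity)]
    rfl
  rw [hV]
  set V := R ^ d * ω with hVdef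
  have hV0 : 0 < V := by positivity
  have hVroot : V ^ ((d : ℝ)⁻¹) = R * ω ^ ((d : ℝ)⁻¹) := by
    rw [hVdef, mul_rpow (by positivity) hω0.le, pow_rpow_inv_natCast hR.le hn.ne']
  have hexp : (V⁻¹) ^ (1 - 1 / r) * (V⁻¹) ^ (1 / q) = V⁻¹ * (V ^ ((d : ℝ)⁻¹))⁻¹ := by
    rw [← rpow_add (by positivity), show 1 - 1 / r + 1 / q = 1 + (d : ℝ)⁻¹ by
      rw [one_div, one_div, hqr]; ring, rpow_add (by positivity), rpow_one,
      inv_rpow hV0.le]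
  rw [mul_rpow (by positivity) hI₂, mul_rpow (by positivity) hI₃]
  refine (mul_le_mul_of_nonneg_left hmain (show 0 ≤ V⁻¹ by positivity)).trans_eq ?_
  have hω1 : 0 < ω ^ ((d : ℝ)⁻¹) := by positivity
  calc V⁻¹ * (orliczSobolevConst E g₁ q * R⁻¹ * I₂ ^ (1 - 1 / r) * I₃ ^ (1 / q))
      = orliczSobolevConst E g₁ q * ω ^ ((d : ℝ)⁻¹) * I₂ ^ (1 - 1 / r) * I₃ ^ (1 / q) *
          (V⁻¹ * (V ^ ((d : ℝ)⁻¹))⁻¹) := by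
        rw [hVroot]; field_simp
    _ = _ := by rw [← hexp]; ring

lemma orliczSobolevConst_nonneg {g₁ q : ℝ} (hg₁ : 0 ≤ g₁) (hq : 0 ≤ q) :
    0 ≤ orliczSobolevConst E g₁ q := by
  unfold orliczSobolevConst
  positivity

lemma IsOrliczPair.parabolic (h : IsOrliczPair g₀ g₁ g G) {q r : ℝ} (hq : 1 ≤ q)
    (hqg : q < g₀) (hr : 1 < r) (hn : 0 < Module.finrank ℝ E)
    (hqr : r⁻¹ = q⁻¹ - (Module.finrank ℝ E : ℝ)⁻¹) {C : ℝ}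
    (hC : orliczSobolevConst E g₁ q *
      volume.real (Metric.ball (0 : E) 1) ^ (Module.finrank ℝ E : ℝ)⁻¹ ≤ C)
    (x₀ : E) {R : ℝ} (hR : 0 < R) {t₁ t₂ : ℝ} (ht : t₁ < t₂) {u : E × ℝ → ℝ}
    (hu : ContDiff ℝ 1 u)
    (hs : ∀ t ∈ Ioo t₁ t₂, HasCompactSupport (fun x => u (x, t)) ∧
      tsupport (fun x => u (x, t)) ⊆ Metric.ball x₀ R) :
    ⨍ z in Metric.ball x₀ R ×ˢ Ioo t₁ t₂,
        G (|u z| / R) ^ (1 / q) * |u z| ^ (2 * (1 - 1 / r)) ≤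
      C * (essSup (fun t => ⨍ x in Metric.ball x₀ R, u (x, t) ^ 2)
          (volume.restrict (Ioo t₁ t₂))) ^ (1 - 1 / r) *
        (⨍ z in Metric.ball x₀ R ×ˢ Ioo t₁ t₂,
          G ‖fderiv ℝ (fun x => u (x, z.2)) z.1‖) ^ (1 / q) := by
  have hq0 : 0 < q := by linarith
  have ha : 0 < 1 - 1 / r := by
    rw [sub_pos, div_lt_one (by linarith)]; exact hr
  have hg₁ : 0 ≤ g₁ := by linarith [h.one_lt, h.le]
  have hlhs : Continuous fun z => G (|u z| / R) ^ (1 / q) * |u z| ^ (2 * (1 - 1 / r)) := by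
    have h1 : Continuous fun z => G (|u z| / R) := by
      refine (h.continuous_comp_abs.comp (hu.continuous.div_const R)).congr fun z => ?_
      simp [abs_div, abs_of_pos hR]
    exact (h1.rpow_const fun _ => Or.inr (by positivity)).mul
      (hu.continuous.abs.rpow_const fun _ => Or.inr (by positivity))
  have hgrad : Continuous fun z : E × ℝ => G ‖fderiv ℝ (fun x => u (x, z.2)) z.1‖ := by
    have h1 : Continuous fun z : E × ℝ => fderiv ℝ (fun x => u (x, z.2)) z.1 := by
      simp only [hu.fderiv_slice_fst]
      exact (hu.continuous_fderiv one_ne_zero).clm_comp continuous_const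
    refine (h.continuous_comp_abs.comp h1.norm).congr fun z => ?_
    simp
  have hC0 : 0 ≤ C :=
    (mul_nonneg (orliczSobolevConst_nonneg hg₁ hq0.le) (by positivity)).trans hC
  set S : ℝ → ℝ := fun t => ⨍ x in Metric.ball x₀ R, u (x, t) ^ 2 with hS
  set F : ℝ → ℝ := fun t => ⨍ x in Metric.ball x₀ R, G ‖fderiv ℝ (fun x => u (x, t)) x‖ with hF
  have hS0 : ∀ t, 0 ≤ S t := fun t => by
    simp only [hS, setAverage_eq, smul_eq_mul]
    exact mul_nonneg (by positivity) (integral_nonneg fun x => sq_nonneg _)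
  have hF0 : ∀ t, 0 ≤ F t := fun t => by
    simp only [hF, setAverage_eq, smul_eq_mul]
    exact mul_nonneg (by positivity) (integral_nonneg fun x => h.nonneg (norm_nonneg _))
  have hSbdd : ∃ M, ∀ t ∈ Ioo t₁ t₂, S t ≤ M := by
    obtain ⟨M, hM⟩ := ((isCompact_closedBall x₀ R).prod
      (isCompact_Icc (a := t₁) (b := t₂))).exists_bound_of_continuousOn
      (hu.continuous.pow 2).continuousOn
    refine ⟨(volume.real (Metric.ball x₀ R))⁻¹ * (M * volume.real (Metric.ball x₀ R)),
      fun t ht' => ?_⟩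
    simp only [hS, setAverage_eq, smul_eq_mul]
    refine mul_le_mul_of_nonneg_left ((le_abs_self _).trans ?_) (by positivity)
    exact norm_setIntegral_le_of_norm_le_const measure_ball_lt_top fun x hx =>
      hM (x, t) ⟨Metric.ball_subset_closedBall hx, Ioo_subset_Icc_self ht'⟩
  have hae : ∀ᵐ t ∂volume.restrict (Ioo t₁ t₂), S t ≤ essSup S (volume.restrict (Ioo t₁ t₂)) := by
    obtain ⟨M, hM⟩ := hSbdd
    refine ae_le_essSup ⟨M, ?_⟩
    rw [eventually_map]
    exact (ae_restrict_iff' measurableSet_Ioo).2 (Eventually.of_forall hM)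
  set K := essSup S (volume.restrict (Ioo t₁ t₂)) with hK
  have hK0 : 0 ≤ K := by
    have : NeZero ((volume : Measure ℝ).restrict (Ioo t₁ t₂)) := ⟨by
      rw [Ne, Measure.restrict_eq_zero]; simpa using ht⟩
    obtain ⟨t, ht'⟩ := hae.exists
    exact (hS0 t).trans ht'
  obtain ⟨hFi, hJ⟩ := setAverage_rpow_le hq ht hF0
    (hgrad.integrableOn_setAverage_ball x₀ R t₁ t₂)
  rw [hlhs.setAverage_ball_prod_Ioo, hgrad.setAverage_ball_prod_Ioo]
  have hle : ⨍ t in Ioo t₁ t₂, ⨍ x in Metric.ball x₀ R,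
      G (|u (x, t)| / R) ^ (1 / q) * |u (x, t)| ^ (2 * (1 - 1 / r)) ≤
      C * K ^ (1 - 1 / r) * ⨍ t in Ioo t₁ t₂, F t ^ (1 / q) := by
    rw [setAverage_eq, setAverage_eq, smul_eq_mul, smul_eq_mul, mul_left_comm,
      ← integral_const_mul (C * K ^ (1 - 1 / r))]
    refine mul_le_mul_of_nonneg_left ?_ (by positivity)
    refine integral_mono_ae (hlhs.integrableOn_setAverage_ball x₀ R t₁ t₂)
      (hFi.const_mul _) ?_
    filter_upwards [hae, ae_restrict_mem measurableSet_Ioo] with t hSt htm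
    have hsl : ContDiff ℝ 1 fun x => u (x, t) := hu.comp (contDiff_id.prodMk contDiff_const)
    refine (h.setAverage_mul_le hq hqg hr hn hqr hR hsl (hs t htm).1 (hs t htm).2).trans ?_
    have h1 : S t ^ (1 - 1 / r) ≤ K ^ (1 - 1 / r) := rpow_le_rpow (hS0 t) hSt ha.le
    exact mul_le_mul_of_nonneg_right (mul_le_mul hC h1
      (rpow_nonneg (hS0 t) _) hC0) (rpow_nonneg (hF0 t) _)
  exact hle.trans (mul_le_mul_of_nonneg_left hJ (mul_nonneg hC0 (rpow_nonneg hK0 _)))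

end Parabolic

/-- Parabolic Sobolev inequality: for `1 ≤ q < min{n, g₀}` and `q* = nq/(n−q)`, there is
`c > 0` depending only on `n, g₁, q` such that for every `R > 0`, every bounded open
interval `Γ = (t₁,t₂)`, and every smooth `u` with `u(·,t)` compactly supported in `B_R`
for all `t ∈ Γ`,
`⨍_{B_R×Γ} G(|u|/R)^{1/q}·|u|^{2(1−1/q*)} ≤ c·(ess sup_{t∈Γ} ⨍_{B_R} |u|²)^{1−1/q*}·(⨍_{B_R×Γ} G(|Du|))^{1/q}`. -/
theorem parabolic_sobolev_orlicz
    (n : ℕ) (hn : 2 ≤ n) (g₁ q : ℝ) (hq1 : 1 ≤ q) (hqn : q < n) (hg₁q : q < g₁) :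
    ∃ c : ℝ, 0 < c ∧
      ∀ (g₀ : ℝ), 1 < g₀ → g₀ ≤ g₁ → q < g₀ →
      ∀ (g g' : ℝ → ℝ),
        (∀ s, 0 < s → 0 < g s) →
        (∀ s, 0 < s → HasDerivAt g (g' s) s) →
        ContinuousOn g' (Set.Ioi 0) →
        (∀ s, 0 < s → (g₀ - 1) * g s ≤ s * g' s ∧ s * g' s ≤ (g₁ - 1) * g s) →
      ∀ (G : ℝ → ℝ), (∀ s, G s = ∫ r in (0:ℝ)..s, g r) →
      ∀ (R : ℝ), 0 < R → ∀ (x₀ : EuclideanSpace ℝ (Fin n)) (t₁ t₂ : ℝ), t₁ < t₂ →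
      ∀ (u : EuclideanSpace ℝ (Fin n) × ℝ → ℝ),
        ContDiff ℝ (⊤ : ℕ∞) u →
        (∀ t ∈ Set.Ioo t₁ t₂, HasCompactSupport (fun x => u (x, t)) ∧
          tsupport (fun x => u (x, t)) ⊆ Metric.ball x₀ R) →
        (⨍ z in (Metric.ball x₀ R) ×ˢ (Set.Ioo t₁ t₂),
            G (|u z| / R) ^ (1 / q) * |u z| ^ (2 * (1 - 1 / (n * q / (n - q)))))
          ≤ c * (essSup (fun t => ⨍ x in Metric.ball x₀ R, (u (x, t)) ^ 2)
                  (volume.restrict (Set.Ioo t₁ t₂))) ^ (1 - 1 / (n * q / (n - q)))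
              * (⨍ z in (Metric.ball x₀ R) ×ˢ (Set.Ioo t₁ t₂),
                  G ‖fderiv ℝ (fun x => u (x, z.2)) z.1‖) ^ (1 / q) := by
  have hn0 : (0 : ℝ) < n := by positivity
  have hq0 : 0 < q := by linarith
  have hnq : 0 < (n : ℝ) - q := by linarith
  have hg₁ : 0 ≤ g₁ := by linarith
  set r : ℝ := n * q / (n - q) with hr
  have hr1 : 1 < r := by
    rw [hr, one_lt_div hnq]
    nlinarith
  have hqr : r⁻¹ = q⁻¹ - (n : ℝ)⁻¹ := by
    rw [hr]; field_simp
  have hfin : Module.finrank ℝ (EuclideanSpace ℝ (Fin n)) = n := finrank_euclideanSpace_fin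
  let C := orliczSobolevConst (EuclideanSpace ℝ (Fin n)) g₁ q *
    volume.real (Metric.ball (0 : EuclideanSpace ℝ (Fin n)) 1) ^ (n : ℝ)⁻¹
  have hC0 : 0 ≤ C := mul_nonneg (orliczSobolevConst_nonneg hg₁ hq0.le) (by positivity)
  refine ⟨C + 1, by linarith, ?_⟩
  intro g₀ hg₀ hg₀₁ hqg g g' hg hg' _ hgr G hG R hR x₀ t₁ t₂ ht u hu hs
  have hO := isOrliczPair_of_growth hg₀ hg₀₁ hg hg' hgr hG
  exact hO.parabolic hq1 hqg hr1 (by rw [hfin]; omega) (by rw [hfin]; exact hqr)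
    (by rw [hfin]; exact (lt_add_one C).le) x₀ hR ht (hu.of_le (by exact_mod_cast le_top)) hs
end

section
/- The function G restricts to a strictly increasing continuous bijection of (0,∞) onto itself, and liminf_{s→∞} s²/G(s) = ∞ holds if and only if lim_{s→∞} s/G^{-1}(s²) = 0, where G^{-1} denotes the inverse of this bijection. -/
open Real MeasureTheory Set Filter

/-- A function with positive derivative on `(0,∞)` is strictly increasing there. -/
lemma strictMonoOn_Ioi_of_hasDerivAt_pos {f f' : ℝ → ℝ}
    (hf : ∀ s, 0 < s → HasDerivAt f (f' s) s) (hf' : ∀ s, 0 < s → 0 < f' s) :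
    StrictMonoOn f (Ioi 0) := by
  refine strictMonoOn_of_deriv_pos (convex_Ioi 0)
    (fun s hs => (hf s hs).continuousAt.continuousWithinAt) fun s hs => ?_
  rw [interior_Ioi] at hs
  rw [(hf s hs).deriv]
  exact hf' s hs

/-- A nonnegative, continuous, monotone function on `(0,∞)` is integrable near `0`. -/
lemma intervalIntegrable_zero_of_monotoneOn_Ioi {f : ℝ → ℝ} (hf : MonotoneOn f (Ioi 0))
    (hc : ContinuousOn f (Ioi 0)) (hpos : ∀ s, 0 < s → 0 ≤ f s) {b : ℝ} (hb : 0 ≤ b) :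
    IntervalIntegrable f volume 0 b := by
  rw [intervalIntegrable_iff_integrableOn_Ioc_of_le hb]
  refine IntegrableOn.of_bound (by simp)
    ((hc.mono Ioc_subset_Ioi_self).aestronglyMeasurable measurableSet_Ioc) (f b) ?_
  refine (ae_restrict_iff' measurableSet_Ioc).2 (Eventually.of_forall fun x hx => ?_)
  rw [Real.norm_of_nonneg (hpos x hx.1)]
  exact hf hx.1 (hx.1.trans_le hx.2) hx.2

/-- The primitive `∫₀ˢ g` of a positive, continuous, monotone function on `(0,∞)` is a strictly
increasing continuous bijection of `(0,∞)` onto itself. -/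
lemma primitive_bijOn_Ioi {g G : ℝ → ℝ} (hg : MonotoneOn g (Ioi 0))
    (hc : ContinuousOn g (Ioi 0)) (hpos : ∀ s, 0 < s → 0 < g s)
    (hG : ∀ s, G s = ∫ r in (0:ℝ)..s, g r) :
    StrictMonoOn G (Ioi 0) ∧ ContinuousOn G (Ioi 0) ∧ BijOn G (Ioi 0) (Ioi 0) := by
  have hint : ∀ b, 0 ≤ b → IntervalIntegrable g volume 0 b := fun b hb =>
    intervalIntegrable_zero_of_monotoneOn_Ioi hg hc (fun s hs => (hpos s hs).le) hb
  have hderiv : ∀ s, 0 < s → HasDerivAt G (g s) s := fun s hs => by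
    rw [funext hG]
    exact intervalIntegral.integral_hasDerivAt_right (hint s hs.le)
      (hc.stronglyMeasurableAtFilter isOpen_Ioi s hs) (hc.continuousAt (Ioi_mem_nhds hs))
  have hmono := strictMonoOn_Ioi_of_hasDerivAt_pos hderiv hpos
  have hcont : ContinuousOn G (Ioi 0) := fun s hs =>
    (hderiv s hs).continuousAt.continuousWithinAt
  have hGpos : ∀ s, 0 < s → 0 < G s := fun s hs => by
    rw [hG]
    exact intervalIntegral.intervalIntegral_pos_of_pos_on (hint s hs.le)
      (fun x hx => hpos x hx.1) hs
  have hupper : ∀ s, 0 < s → G s ≤ s * g s := fun s hs => by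
    have h := intervalIntegral.integral_mono_on_of_le_Ioo hs.le (hint s hs.le)
      (intervalIntegrable_const (c := g s)) fun x hx => hg hx.1 hs hx.2.le
    simpa [hG] using h
  have hlower : ∀ s, 1 ≤ s → (s - 1) * g 1 ≤ G s := fun s hs => by
    have hs0 : (0:ℝ) ≤ s := zero_le_one.trans hs
    have hi : IntervalIntegrable g volume 1 s := (hint 1 zero_le_one).symm.trans (hint s hs0)
    have h := intervalIntegral.integral_mono_on hs (intervalIntegrable_const (c := g 1)) hi
      fun x hx => hg (mem_Ioi.2 one_pos) (one_pos.trans_le hx.1) hx.1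
    have hadd := intervalIntegral.integral_add_adjacent_intervals (hint 1 zero_le_one) hi
    have h1 := hGpos 1 one_pos
    rw [hG] at h1 ⊢
    simp only [intervalIntegral.integral_const, smul_eq_mul] at h
    linarith
  refine ⟨hmono, hcont, fun s hs => hGpos s hs, hmono.injOn, fun y hy => ?_⟩
  have hy : 0 < y := hy
  have h1 := hpos 1 one_pos
  obtain ⟨a, ha, hay⟩ : ∃ a, 0 < a ∧ G a ≤ y := by
    refine ⟨min 1 (y / g 1), by positivity, ?_⟩
    have hm : 0 < min 1 (y / g 1) := by positivity
    calc G (min 1 (y / g 1)) ≤ min 1 (y / g 1) * g (min 1 (y / g 1)) := hupper _ hm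
      _ ≤ y / g 1 * g 1 := by
        gcongr
        · exact (hpos _ hm).le
        · exact min_le_right _ _
        · exact hg hm (mem_Ioi.2 one_pos) (min_le_left _ _)
      _ = y := by field_simp
  obtain ⟨b, hb, hyb⟩ : ∃ b, 0 < b ∧ y ≤ G b := by
    refine ⟨y / g 1 + 1, by positivity, ?_⟩
    have h := hlower (y / g 1 + 1) (by have : 0 < y / g 1 := by positivity
                                       linarith)
    rwa [add_sub_cancel_right, div_mul_cancel₀ _ h1.ne'] at h
  exact (isPreconnected_Ioi.intermediate_value ha hb hcont) ⟨hay, hyb⟩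

/-- For an increasing bijection `G` of `(0,∞)`, the quotient `s²/G(s)` tends to `∞` if and only if
`s/G⁻¹(s²)` tends to `0`. -/
lemma tendsto_sq_div_atTop_iff_tendsto_div_inv_sq {G Ginv : ℝ → ℝ}
    (hmono : StrictMonoOn G (Ioi 0)) (hbij : BijOn G (Ioi 0) (Ioi 0))
    (hinv : InvOn Ginv G (Ioi 0) (Ioi 0)) :
    Tendsto (fun s => s ^ 2 / G s) atTop atTop ↔
      Tendsto (fun s => s / Ginv (s ^ 2)) atTop (nhds 0) := by
  have hinv_pos : ∀ y, 0 < y → 0 < Ginv y := fun y hy => by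
    obtain ⟨x, hx, rfl⟩ := hbij.surjOn hy
    rwa [hinv.1 hx]
  constructor
  · intro h
    have hGinv : Tendsto (fun s => Ginv (s ^ 2)) atTop atTop := by
      refine tendsto_atTop.2 fun M => ?_
      have hM : 0 < max M 1 := by positivity
      filter_upwards [(tendsto_pow_atTop (α := ℝ) two_ne_zero).eventually_ge_atTop (G (max M 1)),
        eventually_gt_atTop 0] with s hs hs0
      have hs2 : 0 < s ^ 2 := by positivity
      rw [← hinv.2 hs2] at hs
      exact (le_max_left _ _).trans ((hmono.le_iff_le hM (hinv_pos _ hs2)).1 hs)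
    have hsqrt := ((tendsto_inv_atTop_zero.comp (h.comp hGinv)).sqrt)
    rw [Real.sqrt_zero] at hsqrt
    refine hsqrt.congr' ?_
    filter_upwards [eventually_gt_atTop 0] with s hs
    have hs2 : 0 < s ^ 2 := by positivity
    have hp := hinv_pos _ hs2
    simp only [Function.comp_apply]
    rw [hinv.2 hs2, inv_div, ← div_pow, Real.sqrt_sq (by positivity)]
  · intro h
    have hG : Tendsto (fun t => √(G t)) atTop atTop := by
      refine Real.tendsto_sqrt_atTop.comp (tendsto_atTop.2 fun M => ?_)
      obtain ⟨x, hx, hxM⟩ := hbij.surjOn (show max M 1 ∈ Ioi (0:ℝ) from by simp)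
      filter_upwards [eventually_ge_atTop x] with t ht
      exact (le_max_left _ _).trans
        (hxM.symm.le.trans (hmono.monotoneOn hx (lt_of_lt_of_le hx ht) ht))
    have hsq := (h.comp hG).pow 2
    rw [zero_pow two_ne_zero] at hsq
    have hcongr : (fun t => ((fun s => s / Ginv (s ^ 2)) ∘ fun t => √(G t)) t ^ 2)
        =ᶠ[atTop] fun t => (t ^ 2 / G t)⁻¹ := by
      filter_upwards [eventually_gt_atTop 0] with t ht
      have hGt : 0 < G t := hbij.mapsTo ht
      simp only [Function.comp_apply]
      rw [Real.sq_sqrt hGt.le, hinv.1 ht, div_pow, Real.sq_sqrt hGt.le, inv_div]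
    have hpos : ∀ᶠ t in atTop, (t ^ 2 / G t)⁻¹ ∈ Ioi (0:ℝ) := by
      filter_upwards [eventually_gt_atTop 0] with t ht
      have hGt : 0 < G t := hbij.mapsTo ht
      exact mem_Ioi.2 (by positivity)
    simpa [Pi.inv_def] using
      (tendsto_nhdsWithin_iff.2 ⟨hsq.congr' hcongr, hpos⟩).inv_tendsto_nhdsGT_zero

/-- `G` restricts to a strictly increasing continuous bijection of `(0,∞)` onto itself,
and `liminf_{s→∞} s²/G(s) = ∞` (i.e. `s²/G(s) → ∞`) holds if and only if
`s/G⁻¹(s²) → 0` as `s → ∞`, where `G⁻¹` is the inverse of this bijection. -/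
theorem G_bijection_and_singular_case_equivalence
    (g₀ g₁ : ℝ) (hg₀ : 1 < g₀) (hg01 : g₀ ≤ g₁)
    (g g' : ℝ → ℝ)
    (hg_pos : ∀ s, 0 < s → 0 < g s)
    (hg_deriv : ∀ s, 0 < s → HasDerivAt g (g' s) s)
    (hg'_cont : ContinuousOn g' (Set.Ioi 0))
    (hOrlicz : ∀ s, 0 < s → (g₀ - 1) * g s ≤ s * g' s ∧ s * g' s ≤ (g₁ - 1) * g s)
    (G : ℝ → ℝ) (hG : ∀ s, G s = ∫ r in (0:ℝ)..s, g r) :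
    StrictMonoOn G (Set.Ioi 0) ∧ ContinuousOn G (Set.Ioi 0) ∧
    Set.BijOn G (Set.Ioi 0) (Set.Ioi 0) ∧
    ∀ Ginv : ℝ → ℝ, Set.InvOn Ginv G (Set.Ioi 0) (Set.Ioi 0) →
      (Filter.Tendsto (fun s => s ^ 2 / G s) Filter.atTop Filter.atTop ↔
        Filter.Tendsto (fun s => s / Ginv (s ^ 2)) Filter.atTop (nhds 0)) := by
  have hg' : ∀ s, 0 < s → 0 < g' s := fun s hs => by
    have h := (mul_pos (sub_pos.2 hg₀) (hg_pos s hs)).trans_le (hOrlicz s hs).1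
    exact pos_of_mul_pos_right h hs.le
  obtain ⟨hmono, hcont, hbij⟩ := primitive_bijOn_Ioi
    (strictMonoOn_Ioi_of_hasDerivAt_pos hg_deriv hg').monotoneOn
    (fun s hs => (hg_deriv s hs).continuousAt.continuousWithinAt) hg_pos hG
  exact ⟨hmono, hcont, hbij, fun Ginv hinv =>
    tendsto_sq_div_atTop_iff_tendsto_div_inv_sq hmono hbij hinv⟩
end
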